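/- For every n ≥ 5 there exists a fully resolvable strict MMDRR(2n); moreover the resolution consists of 2n full rounds. -/

import Mathlib

open scoped Classical

/-- A mixed doubles game: an unordered pair of teams, each team being a
(man, woman) pair, for `n` men and `n` women indexed by `Fin n`. -/
abbrev Game (n : ℕ) := Sym2 (Fin n × Fin n)

/-- A game is valid if its two teams have distinct men and distinct women. -/
def Game.valid {n : ℕ} (g : Game n) : Prop :=
  ∃ a b : Fin n × Fin n, g = s(a, b) ∧ a.1 ≠ b.1 ∧ a.2 ≠ b.2

/-- Man `m` plays in game `g`. -/
def Game.manIn {n : ℕ} (m : Fin n) (g : Game n) : Prop :=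
  ∃ a b : Fin n × Fin n, g = s(a, b) ∧ a.1 = m

/-- Woman `w` plays in game `g`. -/
def Game.womanIn {n : ℕ} (w : Fin n) (g : Game n) : Prop :=
  ∃ a b : Fin n × Fin n, g = s(a, b) ∧ a.2 = w

/-- Man `m` and woman `w` are partners (teammates) in game `g`. -/
def Game.partners {n : ℕ} (m w : Fin n) (g : Game n) : Prop :=
  (m, w) ∈ g

/-- Man `m` and woman `w` are opponents in game `g` (on different teams). -/
def Game.opposesMW {n : ℕ} (m w : Fin n) (g : Game n) : Prop :=
  ∃ a b : Fin n × Fin n, g = s(a, b) ∧ a.1 = m ∧ b.2 = w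

/-- Men `m` and `m'` are opponents in game `g`. -/
def Game.opposesMM {n : ℕ} (m m' : Fin n) (g : Game n) : Prop :=
  ∃ a b : Fin n × Fin n, g = s(a, b) ∧ a.1 = m ∧ b.1 = m'

/-- Women `w` and `w'` are opponents in game `g`. -/
def Game.opposesWW {n : ℕ} (w w' : Fin n) (g : Game n) : Prop :=
  ∃ a b : Fin n × Fin n, g = s(a, b) ∧ a.2 = w ∧ b.2 = w'

/-- A complete mixed doubles round robin tournament CMDRR(n,k). -/
structure CMDRR (n k : ℕ) where
  /-- The spouse pairs (man, woman). -/
  spouses : Finset (Fin n × Fin n)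
  spouses_card : spouses.card = k
  spouses_inj1 : ∀ p ∈ spouses, ∀ q ∈ spouses, p.1 = q.1 → p = q
  spouses_inj2 : ∀ p ∈ spouses, ∀ q ∈ spouses, p.2 = q.2 → p = q
  /-- The multiset of games. -/
  games : Multiset (Game n)
  valid : ∀ g ∈ games, g.valid
  /-- (i) no game contains both members of a spouse pair. -/
  no_spouse_game : ∀ g ∈ games, ∀ p ∈ spouses, ¬ (Game.manIn p.1 g ∧ Game.womanIn p.2 g)
  /-- (ii) every non-spouse man-woman pair partners exactly once ... -/
  partners_once : ∀ m w : Fin n, (m, w) ∉ spouses →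
    games.countP (Game.partners m w) = 1
  /-- ... and opposes exactly once. -/
  opposesMW_once : ∀ m w : Fin n, (m, w) ∉ spouses →
    games.countP (Game.opposesMW m w) = 1
  /-- (iii) a spoused man opposes every other man exactly once. -/
  spousedM_opposes : ∀ m ∈ spouses.image Prod.fst, ∀ m' : Fin n, m' ≠ m →
    games.countP (Game.opposesMM m m') = 1
  /-- (iii) a spoused woman opposes every other woman exactly once. -/
  spousedW_opposes : ∀ w ∈ spouses.image Prod.snd, ∀ w' : Fin n, w' ≠ w →
    games.countP (Game.opposesWW w w') = 1
  /-- (iv) an unspoused man opposes exactly one other unspoused man exactly twice,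
  and all other men exactly once. -/
  unspousedM_opposes : ∀ m : Fin n, m ∉ spouses.image Prod.fst →
    ∃ m' : Fin n, m' ≠ m ∧ m' ∉ spouses.image Prod.fst ∧
      games.countP (Game.opposesMM m m') = 2 ∧
      ∀ m'' : Fin n, m'' ≠ m → m'' ≠ m' → games.countP (Game.opposesMM m m'') = 1
  /-- (iv) likewise for unspoused women. -/
  unspousedW_opposes : ∀ w : Fin n, w ∉ spouses.image Prod.snd →
    ∃ w' : Fin n, w' ≠ w ∧ w' ∉ spouses.image Prod.snd ∧
      games.countP (Game.opposesWW w w') = 2 ∧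
      ∀ w'' : Fin n, w'' ≠ w → w'' ≠ w' → games.countP (Game.opposesWW w w'') = 1

/-- A round: a multiset of games in which each player appears at most once. -/
def IsRound {n : ℕ} (r : Multiset (Game n)) : Prop :=
  (∀ m : Fin n, r.countP (Game.manIn m) ≤ 1) ∧
  (∀ w : Fin n, r.countP (Game.womanIn w) ≤ 1)

/-- A full round: all players play if `n` is even; all but exactly one man and
one woman play if `n` is odd. -/
def FullRound {n : ℕ} (r : Multiset (Game n)) : Prop :=
  IsRound r ∧
  ((Even n ∧ (∀ m : Fin n, r.countP (Game.manIn m) = 1) ∧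
      (∀ w : Fin n, r.countP (Game.womanIn w) = 1)) ∨
   (¬ Even n ∧ (∃! m : Fin n, r.countP (Game.manIn m) = 0) ∧
      (∃! w : Fin n, r.countP (Game.womanIn w) = 0)))



namespace MD

/-- A tournament game with its round: entries `(round, m, w, m', w')`. -/
abbrev Tup (X : Type) := Fin 5 → X

/-- indicator of a proposition -/
noncomputable def ind (P : Prop) : ℕ := if P then 1 else 0

lemma ind_true {P : Prop} (h : P) : ind P = 1 := by rw [ind, if_pos h]
lemma ind_false {P : Prop} (h : ¬ P) : ind P = 0 := by rw [ind, if_neg h]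
lemma ind_eq_zero {P : Prop} : ind P = 0 ↔ ¬ P := by
  by_cases h : P <;> simp [ind, h]

noncomputable def pc {X : Type} (p q : Fin 5) (M : Multiset (Tup X)) (a b : X) : ℕ :=
  (M.map (fun t => ind (t p = a ∧ t q = b))).sum

lemma pc_eq_zero {X : Type} {p q : Fin 5} {M : Multiset (Tup X)} {a b : X} :
    pc p q M a b = 0 ↔ ∀ t ∈ M, ¬ (t p = a ∧ t q = b) := by
  rw [pc, Multiset.sum_eq_zero_iff]
  simp only [Multiset.mem_map, forall_exists_index, and_imp, forall_apply_eq_imp_iff₂, ind_eq_zero]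

def cols : Fin 6 → Fin 5 × Fin 5 × Fin 5 × Fin 5 :=
  ![(1, 2, 3, 4), (1, 4, 3, 2), (0, 1, 0, 3), (0, 2, 0, 4), (1, 3, 3, 1), (2, 4, 4, 2)]

noncomputable def cnt {X : Type} (k : Fin 6) (M : Multiset (Tup X)) (a b : X) : ℕ :=
  pc (cols k).1 (cols k).2.1 M a b + pc (cols k).2.2.1 (cols k).2.2.2 M a b

def hole (k : Fin 6) (x y : Bool) : ℕ := if k.val < 4 then 1 else if x == y then 0 else 2

def FrOn {U : Type} (S : Finset U) : Prop :=
  ∃ M : Multiset (Tup (U × Bool)), ∀ k a b, cnt k M a b =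
    if a.1 ∈ S ∧ b.1 ∈ S ∧ a.1 ≠ b.1 then 1 else 0

def PrOn {U : Type} (S : Finset U) : Prop :=
  ∃ M : Multiset (Tup (U × Bool)), ∀ k a b, cnt k M a b =
    if a.1 ∈ S ∧ b.1 ∈ S then (if a.1 = b.1 then hole k a.2 b.2 else 1) else 0

lemma cnt_add {X : Type} (k : Fin 6) (M N : Multiset (Tup X)) (a b : X) :
    cnt k (M + N) a b = cnt k M a b + cnt k N a b := by
  simp only [cnt, pc, Multiset.map_add, Multiset.sum_add]; ring

lemma cnt_zero {X : Type} (k : Fin 6) (a b : X) : cnt k (0 : Multiset (Tup X)) a b = 0 := by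
  simp [cnt, pc]

lemma cnt_sum {X β : Type} (k : Fin 6) (s : Finset β) (M : β → Multiset (Tup X)) (a b : X) :
    cnt k (∑ i ∈ s, M i) a b = ∑ i ∈ s, cnt k (M i) a b := by
  induction s using Finset.induction_on with
  | empty => simp [cnt_zero]
  | insert i s hi ih => rw [Finset.sum_insert hi, Finset.sum_insert hi, cnt_add, ih]

/-- Gluing along a group divisible design. -/
theorem glue {U β : Type} [Fintype β] (S : Finset U) (B : β → Finset U) (tag : β → Prop)
    (hsub : ∀ b, B b ⊆ S)
    (hF : ∀ b, ¬ tag b → FrOn (B b)) (hP : ∀ b, tag b → PrOn (B b))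
    (h1 : ∀ x ∈ S, ∃! b, tag b ∧ x ∈ B b)
    (h2 : ∀ x ∈ S, ∀ y ∈ S, x ≠ y → ∃! b, x ∈ B b ∧ y ∈ B b) : PrOn S := by
  have hM : ∀ b, ∃ M : Multiset (Tup (U × Bool)), ∀ k a c, cnt k M a c =
      if a.1 ∈ B b ∧ c.1 ∈ B b then
        (if a.1 = c.1 then (if tag b then hole k a.2 c.2 else 0) else 1) else 0 := by
    intro b
    by_cases hb : tag b
    · obtain ⟨M, hM⟩ := hP b hb
      refine ⟨M, fun k a c => ?_⟩
      rw [hM]; simp [hb]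
    · obtain ⟨M, hM⟩ := hF b hb
      refine ⟨M, fun k a c => ?_⟩
      rw [hM]
      by_cases h : a.1 = c.1 <;> simp [hb, h]
  choose M hM using hM
  refine ⟨∑ b, M b, fun k a c => ?_⟩
  rw [cnt_sum]
  simp only [hM]
  by_cases hac : a.1 ∈ S ∧ c.1 ∈ S
  · rw [if_pos hac]
    by_cases h : a.1 = c.1
    · rw [if_pos h]
      obtain ⟨b, ⟨hb1, hb2⟩, hb3⟩ := h1 _ hac.1
      rw [Finset.sum_eq_single b]
      · simp [hb1, hb2, ← h]
      · intro b' _ hne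
        by_cases ht : a.1 ∈ B b'
        · have : ¬ tag b' := fun h' => hne (hb3 b' ⟨h', ht⟩)
          simp [this, h]
        · simp [ht]
      · simp
    · rw [if_neg h]
      obtain ⟨b, hb1, hb3⟩ := h2 _ hac.1 _ hac.2 h
      rw [Finset.sum_eq_single b]
      · simp only [h, if_false]; rw [if_pos hb1]
      · intro b' _ hne
        rw [if_neg (fun h' => hne (hb3 b' h'))]
      · simp
  · rw [if_neg hac]
    apply Finset.sum_eq_zero
    intro b _
    rw [if_neg]
    exact fun h => hac ⟨hsub b h.1, hsub b h.2⟩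

lemma mem_of_cnt {U : Type} (S : Finset U) (M : Multiset (Tup (U × Bool)))
    (h : ∀ k a b, ¬ (a.1 ∈ S ∧ b.1 ∈ S) → cnt k M a b = 0) :
    ∀ t ∈ M, ∀ p, (t p).1 ∈ S := by
  intro t ht p
  have key : ∀ k, (t (cols k).1).1 ∈ S ∧ (t (cols k).2.1).1 ∈ S := by
    intro k
    by_contra hc
    have := h k _ _ hc
    rw [cnt, Nat.add_eq_zero_iff, pc_eq_zero] at this
    exact this.1 t ht ⟨rfl, rfl⟩
  have h0 := key 0
  have h2 := key 2
  have h4 := key 4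
  have h5 := key 5
  simp [cols] at h0 h2 h4 h5
  fin_cases p
  · exact h2.1
  · exact h0.1
  · exact h0.2
  · exact h4.2
  · exact h5.2

lemma pc_map {U U' : Type} (S : Finset U) (f : U → U') (hf : Set.InjOn f S)
    (M : Multiset (Tup (U × Bool))) (hM : ∀ t ∈ M, ∀ p, (t p).1 ∈ S) (p q : Fin 5)
    (a b : U × Bool) (ha : a.1 ∈ S) (hb : b.1 ∈ S) :
    pc p q (M.map (fun t i => Prod.map f id (t i))) (Prod.map f id a) (Prod.map f id b)
      = pc p q M a b := by
  rw [pc, pc, Multiset.map_map]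
  congr 1
  apply Multiset.map_congr rfl
  intro t ht
  have key : ∀ p (a : U × Bool), a.1 ∈ S → (Prod.map f id (t p) = Prod.map f id a ↔ t p = a) := by
    intro p a ha
    constructor
    · intro h
      have h1 := congrArg Prod.fst h
      have h2 := congrArg Prod.snd h
      simp at h1 h2
      exact Prod.ext (hf (hM t ht p) ha h1) h2
    · intro h; rw [h]
  simp only [Function.comp, key p a ha, key q b hb]

lemma transfer {U U' : Type} (S : Finset U) (S' : Finset U') (f : U → U') (hf : Set.InjOn f S)
    (himg : ∀ y, y ∈ S' ↔ ∃ x ∈ S, f x = y) (w : Fin 6 → Bool → Bool → ℕ)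
    (h : ∃ M : Multiset (Tup (U × Bool)), ∀ k a b, cnt k M a b =
      if a.1 ∈ S ∧ b.1 ∈ S then (if a.1 = b.1 then w k a.2 b.2 else 1) else 0) :
    ∃ M : Multiset (Tup (U' × Bool)), ∀ k a b, cnt k M a b =
      if a.1 ∈ S' ∧ b.1 ∈ S' then (if a.1 = b.1 then w k a.2 b.2 else 1) else 0 := by
  obtain ⟨M, hM⟩ := h
  have hmem := mem_of_cnt S M (fun k a b hab => by rw [hM, if_neg hab])
  refine ⟨M.map (fun t i => Prod.map f id (t i)), ?_⟩
  rintro k ⟨a, i⟩ ⟨b, j⟩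
  by_cases hab : a ∈ S' ∧ b ∈ S'
  · rw [if_pos hab]
    obtain ⟨x, hx, rfl⟩ := (himg a).1 hab.1
    obtain ⟨y, hy, rfl⟩ := (himg b).1 hab.2
    have e1 := fun p q => pc_map S f hf M hmem p q (x, i) (y, j) hx hy
    simp only [Prod.map_apply, id_eq] at e1
    have e2 := hM k (x, i) (y, j)
    simp only [cnt] at e2 ⊢
    rw [e1, e1, e2, if_pos ⟨hx, hy⟩]
    simp only [hf.eq_iff hx hy]
  · rw [if_neg hab]
    have key : ∀ p q, pc p q (M.map (fun t i => Prod.map f id (t i))) (a, i) (b, j) = 0 := by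
      intro p q
      rw [pc_eq_zero]
      intro t ht ⟨h1, h2⟩
      obtain ⟨t', ht', rfl⟩ := Multiset.mem_map.1 ht
      apply hab
      have h1 := congrArg Prod.fst h1
      have h2 := congrArg Prod.fst h2
      simp at h1 h2
      exact ⟨(himg a).2 ⟨_, hmem t' ht' p, h1⟩, (himg b).2 ⟨_, hmem t' ht' q, h2⟩⟩
    simp only [cnt, key]

lemma exists_map {U U' : Type} (S : Finset U) (S' : Finset U') (h : S.card = S'.card) (hS : S.Nonempty) :
    ∃ f : U → U', Set.InjOn f S ∧ ∀ y, y ∈ S' ↔ ∃ x ∈ S, f x = y := by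
  have e := Finset.equivOfCardEq h
  obtain ⟨x0, hx0⟩ := hS
  refine ⟨fun x => if hx : x ∈ S then (e ⟨x, hx⟩).1 else (e ⟨x0, hx0⟩).1, ?_, ?_⟩
  · intro x hx y hy hxy
    have hx' : x ∈ S := hx
    have hy' : y ∈ S := hy
    simp only [hx', hy', dif_pos] at hxy
    have := e.injective (Subtype.ext hxy)
    exact congrArg Subtype.val this
  · intro y
    constructor
    · intro hy
      refine ⟨(e.symm ⟨y, hy⟩).1, (e.symm ⟨y, hy⟩).2, ?_⟩
      simp
    · rintro ⟨x, hx, rfl⟩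
      simp only [hx, dif_pos]
      exact (e ⟨x, hx⟩).2

lemma FrOn_iff {U : Type} (S : Finset U) : FrOn S ↔
    ∃ M : Multiset (Tup (U × Bool)), ∀ k a b, cnt k M a b =
      if a.1 ∈ S ∧ b.1 ∈ S then (if a.1 = b.1 then (fun _ _ _ => 0 : Fin 6 → Bool → Bool → ℕ) k a.2 b.2 else 1) else 0 := by
  unfold FrOn
  have : ∀ a b : U × Bool, (if a.1 ∈ S ∧ b.1 ∈ S ∧ a.1 ≠ b.1 then 1 else 0) =
     if a.1 ∈ S ∧ b.1 ∈ S then (if a.1 = b.1 then 0 else 1) else 0 := by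
    intro a b; split_ifs <;> first | rfl | tauto
  simp only [this]

lemma FrOn_le_one {U : Type} (S : Finset U) (h : S.card ≤ 1) : FrOn S := by
  refine ⟨0, fun k a b => ?_⟩
  rw [cnt_zero, if_neg]
  rintro ⟨h1, h2, h3⟩
  exact h3 (Finset.card_le_one.1 h _ h1 _ h2)

lemma PrOn_empty {U : Type} (S : Finset U) (h : S.card = 0) : PrOn S := by
  rw [Finset.card_eq_zero] at h
  subst h
  exact ⟨0, fun k a b => by rw [cnt_zero]; simp⟩

def PrN (n : ℕ) : Prop := PrOn (Finset.univ : Finset (Fin n))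
def FrN (n : ℕ) : Prop := FrOn (Finset.univ : Finset (Fin n))

lemma PrOn_card {U U' : Type} (S : Finset U) (S' : Finset U') (h : S.card = S'.card)
    (hS : PrOn S) : PrOn S' := by
  rcases S.eq_empty_or_nonempty with h0 | h0
  · exact PrOn_empty _ (by rw [← h, h0]; rfl)
  · obtain ⟨f, hf1, hf2⟩ := exists_map S S' h h0
    exact transfer S S' f hf1 hf2 hole hS

lemma FrOn_card {U U' : Type} (S : Finset U) (S' : Finset U') (h : S.card = S'.card)
    (hS : FrOn S) : FrOn S' := by
  rcases S.eq_empty_or_nonempty with h0 | h0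
  · exact FrOn_le_one _ (by rw [← h, h0]; simp)
  · obtain ⟨f, hf1, hf2⟩ := exists_map S S' h h0
    rw [FrOn_iff] at hS ⊢
    exact transfer S S' f hf1 hf2 (fun _ _ _ => 0) hS

lemma PrOn_of_N {U : Type} (S : Finset U) (h : PrN S.card) : PrOn S :=
  PrOn_card _ _ (by simp) h
lemma FrOn_of_N {U : Type} (S : Finset U) (h : FrN S.card) : FrOn S :=
  FrOn_card _ _ (by simp) h
lemma PrN_of {U : Type} (S : Finset U) {n : ℕ} (hn : S.card = n) (h : PrOn S) : PrN n :=
  PrOn_card _ _ (by simp [hn]) h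
lemma FrN_of {U : Type} (S : Finset U) {n : ℕ} (hn : S.card = n) (h : FrOn S) : FrN n :=
  FrOn_card _ _ (by simp [hn]) h

/-- the two games on a hole -/
def holeM {U : Type} (x : U) : Multiset (Tup (U × Bool)) :=
  {![(x, false), (x, false), (x, false), (x, true), (x, true)],
   ![(x, true), (x, false), (x, true), (x, true), (x, false)]}

lemma cnt_holeM {U : Type} (x : U) (k : Fin 6) (a b : U × Bool) :
    cnt k (holeM x) a b = if a.1 = x ∧ b.1 = x then hole k a.2 b.2 else 0 := by
  obtain ⟨a, i⟩ := a
  obtain ⟨b, j⟩ := b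
  have hx : ∀ t ∈ holeM x, ∀ p, (t p).1 = x := by
    intro t ht p
    simp only [holeM, Multiset.insert_eq_cons, Multiset.mem_cons, Multiset.mem_singleton] at ht
    rcases ht with rfl | rfl <;> fin_cases p <;> rfl
  by_cases h : a = x ∧ b = x
  · obtain ⟨rfl, rfl⟩ := h
    fin_cases k <;> cases i <;> cases j <;>
        simp [cnt, pc, holeM, hole, cols, ind]
  · rw [if_neg h]
    have : ∀ p q, pc p q (holeM x) (a, i) (b, j) = 0 := by
      intro p q
      rw [pc_eq_zero]
      intro t ht ⟨h1, h2⟩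
      apply h
      have := hx t ht p
      have := hx t ht q
      simp_all
    simp [cnt, this]

lemma PrN_one : PrN 1 := by
  refine ⟨holeM 0, fun k a b => ?_⟩
  rw [cnt_holeM]
  have h1 : a.1 = 0 := Subsingleton.elim _ _
  have h2 : b.1 = 0 := Subsingleton.elim _ _
  simp [h1, h2]

lemma PrN_of_FrN {n : ℕ} (h : FrN n) : PrN n := by
  refine glue (β := Option (Fin n)) Finset.univ
    (fun b => match b with | none => Finset.univ | some x => {x})
    (fun b => b ≠ none) (by simp) ?_ ?_ ?_ ?_
  · intro b hb
    have : b = none := by simpa using hb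
    subst this
    exact h
  · intro b hb
    cases b with
    | none => exact absurd rfl hb
    | some x => exact PrOn_of_N _ (by simpa using PrN_one)
  · intro x _
    refine ⟨some x, by simp, ?_⟩
    rintro (_ | y) hy
    · simp at hy
    · simp at hy; rw [hy]
  · intro x _ y _ hxy
    refine ⟨none, by simp, ?_⟩
    rintro (_ | z) hz
    · rfl
    · simp at hz; exact absurd (hz.1.trans hz.2.symm) hxy

end MD

namespace MD

section dev
variable {G : Type} [AddCommGroup G] [Fintype G]

/-- translation -/
def tr (s : G) (x : (G ⊕ ℕ) × Bool) : (G ⊕ ℕ) × Bool := (x.1.map (· + s) id, x.2)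

/-- development of base games -/
def dev (L : Multiset (Tup ((G ⊕ ℕ) × Bool))) : Multiset (Tup ((G ⊕ ℕ) × Bool)) :=
  ∑ s : G, L.map (fun t p => tr s (t p))

def okp : G ⊕ ℕ → G ⊕ ℕ → G ⊕ ℕ → G ⊕ ℕ → Prop
  | .inl x, .inl y, .inl x', .inl y' => y - x = y' - x'
  | .inr i, .inl _, .inr j, .inl _ => i = j
  | .inl _, .inr i, .inl _, .inr j => i = j
  | _, _, _, _ => False

def sk (u v a b : (G ⊕ ℕ) × Bool) : Prop :=
  u.2 = a.2 ∧ v.2 = b.2 ∧ okp u.1 v.1 a.1 b.1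

lemma sum_ind_eq (c : G) (P : G → Prop) (Q : Prop) (h : ∀ s, P s ↔ (s = c ∧ Q)) :
    ∑ s, ind (P s) = ind Q := by
  simp only [h]
  rw [Finset.sum_eq_single c]
  · simp
  · intro b _ hb; simp [ind, hb]
  · simp

lemma sum_tr (u v a b : (G ⊕ ℕ) × Bool) (hab : ¬ (a.1.isRight ∧ b.1.isRight)) :
    ∑ s : G, ind (tr s u = a ∧ tr s v = b) = ind (sk u v a b) := by
  obtain ⟨u, i⟩ := u
  obtain ⟨v, j⟩ := v
  obtain ⟨a, i'⟩ := a
  obtain ⟨b, j'⟩ := b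
  have z : ∀ P : G → Prop, (∀ s, ¬ P s) → ∑ s, ind (P s) = 0 := by
    intro P hP
    exact Finset.sum_eq_zero (fun s _ => ind_false (hP s))
  rcases u with x | u <;> rcases v with y | v <;> rcases a with x' | a <;> rcases b with y' | b
  all_goals first
    | (exfalso; exact hab ⟨rfl, rfl⟩)
    | (rw [ind_false (by simp [sk, okp])]; apply z; intro s; simp [tr]; done)
    | skip
  · apply sum_ind_eq (x' - x)
    intro s
    simp only [tr, sk, okp, Sum.map_inl, Sum.map_inr, id_eq, Prod.mk.injEq, Sum.inl.injEq, Sum.inr.injEq, eq_sub_iff_add_eq, add_comm s x]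
    constructor
    · rintro ⟨⟨rfl, rfl⟩, rfl, rfl⟩
      refine ⟨rfl, rfl, rfl, ?_⟩
      abel
    · rintro ⟨rfl, rfl, rfl, h⟩
      refine ⟨⟨rfl, rfl⟩, ?_, rfl⟩
      have : y = y' - (x + s) + x := by rw [← h]; abel
      rw [this]; abel
  · apply sum_ind_eq (x' - x)
    intro s
    simp only [tr, sk, okp, Sum.map_inl, Sum.map_inr, id_eq, Prod.mk.injEq, Sum.inl.injEq, Sum.inr.injEq, eq_sub_iff_add_eq, add_comm s x]
    tauto
  · apply sum_ind_eq (y' - y)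
    intro s
    simp only [tr, sk, okp, Sum.map_inl, Sum.map_inr, id_eq, Prod.mk.injEq, Sum.inl.injEq, Sum.inr.injEq, eq_sub_iff_add_eq, add_comm s y]
    tauto

lemma pc_dev (L : Multiset (Tup ((G ⊕ ℕ) × Bool))) (p q : Fin 5) (a b : (G ⊕ ℕ) × Bool) :
    pc p q (dev L) a b =
      (L.map (fun t => ∑ s : G, ind (tr s (t p) = a ∧ tr s (t q) = b))).sum := by
  have : ∀ S : Finset G, pc p q (∑ s ∈ S, L.map (fun t p => tr s (t p))) a b =
      (L.map (fun t => ∑ s ∈ S, ind (tr s (t p) = a ∧ tr s (t q) = b))).sum := by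
    intro S
    induction S using Finset.induction_on with
    | empty => simp [pc]
    | insert i S hi ih =>
      simp only [Finset.sum_insert hi]
      rw [Multiset.sum_map_add, ← ih]
      simp only [pc, Multiset.map_add, Multiset.sum_add, Multiset.map_map, Function.comp]
  exact this _

lemma pc_dev' (L : Multiset (Tup ((G ⊕ ℕ) × Bool))) (p q : Fin 5) (a b : (G ⊕ ℕ) × Bool)
    (hab : ¬ (a.1.isRight ∧ b.1.isRight)) :
    pc p q (dev L) a b = (L.map (fun t => ind (sk (t p) (t q) a b))).sum := by
  rw [pc_dev]
  simp only [sum_tr _ _ _ _ hab]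

lemma pc_dev_none (L : Multiset (Tup ((G ⊕ ℕ) × Bool))) (p q : Fin 5) (a b : (G ⊕ ℕ) × Bool)
    (hab : a.1.isRight ∧ b.1.isRight) (hL : ∀ t ∈ L, ¬ ((t p).1.isRight ∧ (t q).1.isRight)) :
    pc p q (dev L) a b = 0 := by
  rw [pc_dev, Multiset.sum_eq_zero_iff]
  intro n hn
  obtain ⟨t, ht, rfl⟩ := Multiset.mem_map.1 hn
  apply Finset.sum_eq_zero
  intro s _
  rw [ind_eq_zero]
  rintro ⟨rfl, rfl⟩
  apply hL t ht
  simpa [tr] using hab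

end dev

/-! ### numerical checker -/

/-- key of a pair of point codes -/
def nk (g p q : ℕ) : ℕ :=
  bif Nat.blt (p / 2) g then
    bif Nat.blt (q / 2) g then 4 * ((q / 2 + (g - p / 2)) % g) + (2 * (p % 2) + q % 2)
    else 4 * g + 8 * (q / 2 - g) + 5 + (2 * (p % 2) + q % 2)
  else bif Nat.blt (q / 2) g then 4 * g + 8 * (p / 2 - g) + 1 + (2 * (p % 2) + q % 2) else 4 * g

abbrev NT := ℕ × ℕ × ℕ × ℕ × ℕ

def ksel (g : ℕ) : Fin 6 → NT → ℕ × ℕ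
  | 0, (_, m, w, m', w') => (nk g m w, nk g m' w')
  | 1, (_, m, w, m', w') => (nk g m w', nk g m' w)
  | 2, (r, m, _, m', _) => (nk g r m, nk g r m')
  | 3, (r, _, w, _, w') => (nk g r w, nk g r w')
  | 4, (_, m, _, m', _) => (nk g m m', nk g m' m)
  | 5, (_, _, w, _, w') => (nk g w w', nk g w' w)

def b1 (x k : ℕ) : ℕ := bif Nat.beq x k then 1 else 0

def cn (k : ℕ) : List (ℕ × ℕ) → ℕ
  | [] => 0
  | x :: l => b1 x.1 k + b1 x.2 k + cn k l

def holeN (c : Fin 6) (k : ℕ) : ℕ :=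
  bif Nat.blt c.val 4 then 1 else bif Nat.beq k 0 || Nat.beq k 3 then 0 else 2

/-- target multiplicities -/
def tgt (g kk z : ℕ) (c : Fin 6) (k : ℕ) : ℕ :=
  bif Nat.blt k 4 then z * holeN c k else bif Nat.beq k (4 * g) then 0
  else bif Nat.blt k (4 * g + 8 * kk + 1) then 1 else 0

def accT (t : ℕ → ℕ) : ℕ → ℕ
  | 0 => 0
  | k + 1 => accT t k + t k * 1024 ^ k

def bnd (N : ℕ) (l : List (ℕ × ℕ)) : Bool := l.all (fun x => Nat.blt x.1 N && Nat.blt x.2 N)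

def accS : List (ℕ × ℕ) → ℕ
  | [] => 0
  | x :: l => 1024 ^ x.1 + 1024 ^ x.2 + accS l

def chkK (g kk z : ℕ) (c : Fin 6) (l : List (ℕ × ℕ)) : Bool :=
  bnd (4 * g + 8 * kk + 1) l &&
    Nat.beq (accS l) (accT (tgt g kk z c) (4 * g + 8 * kk + 1))

def chk (g kk z : ℕ) (L : List NT) : Bool :=
  (Nat.blt (2 * L.length) 1024 && Nat.blt z 2) &&
  (chkK g kk z 0 (L.map (ksel g 0)) && chkK g kk z 1 (L.map (ksel g 1)) &&
  chkK g kk z 2 (L.map (ksel g 2)) && chkK g kk z 3 (L.map (ksel g 3)) &&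
  chkK g kk z 4 (L.map (ksel g 4)) && chkK g kk z 5 (L.map (ksel g 5)))

def dc (g c : ℕ) : (ZMod g ⊕ ℕ) × Bool :=
  (if c / 2 < g then .inl ((c / 2 : ℕ) : ZMod g) else .inr (c / 2 - g), Nat.beq (c % 2) 1)

def dct (g : ℕ) (t : NT) : Tup ((ZMod g ⊕ ℕ) × Bool) :=
  ![dc g t.1, dc g t.2.1, dc g t.2.2.1, dc g t.2.2.2.1, dc g t.2.2.2.2]

def enc {g : ℕ} (x : (ZMod g ⊕ ℕ) × Bool) : ℕ :=
  match x with
  | (.inl x, i) => 2 * x.val + i.toNat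
  | (.inr n, i) => 2 * (g + n) + i.toNat

lemma sk_iff {g : ℕ} [NeZero g] (p q : ℕ) (a b : (ZMod g ⊕ ℕ) × Bool)
    (hab : ¬ (a.1.isRight ∧ b.1.isRight)) :
    sk (dc g p) (dc g q) a b ↔ nk g p q = nk g (enc a) (enc b) := by
  obtain ⟨a, i⟩ := a
  obtain ⟨b, j⟩ := b
  have hp2 : p % 2 < 2 := Nat.mod_lt _ (by norm_num)
  have hq2 : q % 2 < 2 := Nat.mod_lt _ (by norm_num)
  have e1 : ∀ (p : ℕ) (i : Bool), Nat.beq (p % 2) 1 = i ↔ p % 2 = i.toNat := by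
    intro p i
    have : p % 2 = 0 ∨ p % 2 = 1 := by omega
    rcases this with h | h <;> rw [h] <;> cases i <;> decide
  have e2 : ∀ (x : ℕ) (i : Bool), (2 * x + i.toNat) / 2 = x := by
    intro x i; have : i.toNat < 2 := by cases i <;> decide
    omega
  have e3 : ∀ (x : ℕ) (i : Bool), (2 * x + i.toNat) % 2 = i.toNat := by
    intro x i; have : i.toNat < 2 := by cases i <;> decide
    omega
  have hi : i.toNat < 2 := by cases i <;> decide
  have hj : j.toNat < 2 := by cases j <;> decide
  have hlt : ∀ x y, (x + y) % g < g := fun x y => Nat.mod_lt _ (NeZero.pos g)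
  have hv : ∀ x : ZMod g, x.val < g := fun x => ZMod.val_lt x
  have bl : ∀ x, Nat.blt x g = decide (x < g) := by
    intro x
    rw [Bool.eq_iff_iff, Nat.blt_eq, decide_eq_true_iff]
  have cast : ∀ p q : ℕ, p < g → ((q + (g - p) : ℕ) : ZMod g) = (q : ZMod g) - (p : ZMod g) := by
    intro p q hp
    rw [Nat.cast_add, Nat.cast_sub hp.le, ZMod.natCast_self]; ring
  simp only [sk, dc, e1]
  have bl3 : ∀ n, ¬ g + n < g := by intro n; omega
  by_cases hp : p / 2 < g <;> by_cases hq : q / 2 < g <;> rcases a with x | u <;>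
    rcases b with y | v <;>
    simp only [nk, enc, e2, e3, bl, hp, hq, okp, hv, bl3, Nat.add_sub_cancel_left, decide_true, decide_false, if_true, if_false, cond_true, cond_false] <;>
    first
    | (exfalso; exact hab ⟨rfl, rfl⟩)
    | (have := hlt (q / 2) (g - p / 2); have := hv x; have := hv y
       have h1 := hlt y.val (g - x.val)
       have key : ((q / 2 : ℕ) : ZMod g) - ((p / 2 : ℕ) : ZMod g) = y - x ↔
          (q / 2 + (g - p / 2)) % g = (y.val + (g - x.val)) % g := by
         rw [← cast _ _ hp]
         conv_lhs => rw [← ZMod.natCast_zmod_val y, ← ZMod.natCast_zmod_val x]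
         rw [← cast _ _ (hv x), ZMod.natCast_eq_natCast_iff']
       rw [key]
       constructor
       · rintro ⟨h1, h2, h3⟩; rw [h1, h2, h3]
       · intro h; omega)
    | (have h1 := hlt (q / 2) (g - p / 2); have h2 := hlt y.val (g - x.val)
       simp only [and_false, and_true, false_iff]; omega)
    | (have h1 := hlt (q / 2) (g - p / 2); simp only [and_false, and_true, false_iff]; omega)
    | omega

lemma dig (N : ℕ) (a b : ℕ → ℕ) (ha : ∀ k, a k < 1024) (hb : ∀ k, b k < 1024)
    (h : accT a N = accT b N) : ∀ k < N, a k = b k := by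
  have lt : ∀ (a : ℕ → ℕ), (∀ k, a k < 1024) → ∀ N, accT a N < 1024 ^ N := by
    intro a ha N
    induction N with
    | zero => simp [accT]
    | succ n ih =>
      have := Nat.mul_le_mul_right (1024 ^ n) (Nat.le_of_lt_succ (ha n))
      rw [accT, pow_succ]; omega
  induction N with
  | zero => intro k hk; omega
  | succ n ih =>
    rw [accT, accT] at h
    have h1 := lt a ha n
    have h2 := lt b hb n
    have h3 : a n = b n := by
      have e1 := congrArg (· / 1024 ^ n) h
      rwa [Nat.add_mul_div_right _ _ (by positivity), Nat.add_mul_div_right _ _ (by positivity),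
        Nat.div_eq_of_lt h1, Nat.div_eq_of_lt h2, zero_add, zero_add] at e1
    rw [h3] at h
    intro k hk
    rcases Nat.lt_succ_iff_lt_or_eq.1 hk with hk | rfl
    · exact ih (Nat.add_right_cancel h) k hk
    · exact h3

lemma accT_add (a b : ℕ → ℕ) (N : ℕ) : accT (fun k => a k + b k) N = accT a N + accT b N := by
  induction N with
  | zero => rfl
  | succ n ih => simp only [accT, ih]; ring

lemma accT_b1 (x N : ℕ) : accT (b1 x) N = if x < N then 1024 ^ x else 0 := by
  induction N with
  | zero => rfl
  | succ n ih =>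
    rw [accT, ih]
    by_cases h : x = n
    · subst h; simp [b1]
    · have : Nat.beq x n = false := by rw [← Bool.not_eq_true, Nat.beq_eq]; exact h
      have h2 : x < n + 1 ↔ x < n := by omega
      simp [b1, this, h2]

lemma accS_eq (N : ℕ) (l : List (ℕ × ℕ)) (h : bnd N l = true) :
    accS l = accT (fun k => cn k l) N ∧ ∀ k, N ≤ k → cn k l = 0 := by
  induction l with
  | nil =>
    refine ⟨?_, fun _ _ => rfl⟩
    induction N with
    | zero => rfl
    | succ n ih => rw [accT, ← ih rfl]; simp [cn]
  | cons x l ih =>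
    simp only [bnd, List.all_cons, Bool.and_eq_true, Nat.blt_eq] at h
    obtain ⟨i1, i2⟩ := ih h.2
    constructor
    · simp only [cn, accS]
      rw [accT_add _ _ N, accT_add (b1 x.1) (b1 x.2) N, accT_b1, accT_b1, if_pos h.1.1, if_pos h.1.2, ← i1]
    · intro k hk
      have h3 : Nat.beq x.1 k = false := by rw [← Bool.not_eq_true, Nat.beq_eq]; omega
      have h4 : Nat.beq x.2 k = false := by rw [← Bool.not_eq_true, Nat.beq_eq]; omega
      simp [cn, i2 k hk, b1, h3, h4]

lemma cn_le (k : ℕ) (l : List (ℕ × ℕ)) : cn k l ≤ 2 * l.length := by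
  have hb : ∀ x, b1 x k ≤ 1 := by intro x; unfold b1; cases Nat.beq x k <;> simp
  induction l with
  | nil => simp [cn]
  | cons x l ih =>
    have := hb x.1
    have := hb x.2
    simp only [cn, List.length_cons]; omega

lemma tgt_lt (g kk z : ℕ) (c : Fin 6) (k : ℕ) (hz : z < 2) : tgt g kk z c k < 1024 := by
  have : holeN c k ≤ 2 := by
    unfold holeN
    cases Nat.blt c.val 4 <;> cases Nat.beq k 0 || Nat.beq k 3 <;> simp
  have : z * holeN c k ≤ 1 * 2 := Nat.mul_le_mul (by omega) this
  unfold tgt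
  cases Nat.blt k 4 <;> cases Nat.beq k (4 * g) <;> cases Nat.blt k (4 * g + 8 * kk + 1) <;>
    simp only [cond_true, cond_false] <;> omega

lemma cn_eq (k : ℕ) (L : List NT) (f : NT → ℕ × ℕ) :
    cn k (L.map f) = (L.map (fun t => ind ((f t).1 = k))).sum +
      (L.map (fun t => ind ((f t).2 = k))).sum := by
  have hb : ∀ x k, b1 x k = ind (x = k) := by
    intro x k
    by_cases h : x = k
    · subst h; simp [b1, ind]
    · have : Nat.beq x k = false := by rw [← Bool.not_eq_true, Nat.beq_eq]; exact h
      simp [b1, ind, h, this]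
  induction L with
  | nil => rfl
  | cons t L ih =>
    simp only [List.map_cons, cn, ih, List.sum_cons, hb]
    ring

lemma ksel_eq (g : ℕ) (c : Fin 6) (t : NT) : ∃ e : Fin 5 → ℕ,
    dct g t = (fun p => dc g (e p)) ∧
    ksel g c t = (nk g (e (cols c).1) (e (cols c).2.1), nk g (e (cols c).2.2.1) (e (cols c).2.2.2)) := by
  obtain ⟨r, m, w, m', w'⟩ := t
  refine ⟨![r, m, w, m', w'], ?_, ?_⟩
  · funext p; fin_cases p <;> rfl
  · fin_cases c <;> rfl

lemma chk_cn {g kk z : ℕ} [NeZero g] {L : List NT} (h : chk g kk z L = true) (c : Fin 6) (k : ℕ) :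
    cn k (L.map (ksel g c)) = tgt g kk z c k := by
  simp only [chk, Bool.and_eq_true, Nat.blt_eq] at h
  obtain ⟨⟨hl, hz⟩, h⟩ := h
  have key : ∀ c : Fin 6, chkK g kk z c (L.map (ksel g c)) = true := by
    intro c
    fin_cases c
    · exact h.1.1.1.1.1
    · exact h.1.1.1.1.2
    · exact h.1.1.1.2
    · exact h.1.1.2
    · exact h.1.2
    · exact h.2
  have := key c
  simp only [chkK, Bool.and_eq_true] at this
  obtain ⟨h1, h2⟩ := this
  obtain ⟨h3, h4⟩ := accS_eq _ _ h1
  have h5 := Nat.eq_of_beq_eq_true h2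
  rw [h3] at h5
  by_cases hk : k < 4 * g + 8 * kk + 1
  · refine dig _ _ _ ?_ ?_ h5 k hk
    · intro k
      refine lt_of_le_of_lt (cn_le _ _) ?_
      rw [List.length_map]; exact hl
    · intro k; exact tgt_lt _ _ _ _ _ hz
  · rw [h4 k (by omega)]
    have hg : 0 < g := NeZero.pos g
    have b1 : Nat.blt k 4 = false := by rw [← Bool.not_eq_true, Nat.blt_eq]; omega
    have b2 : Nat.beq k (4 * g) = false := by rw [← Bool.not_eq_true, Nat.beq_eq]; omega
    have b3 : Nat.blt k (4 * g + 8 * kk + 1) = false := by rw [← Bool.not_eq_true, Nat.blt_eq]; omega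
    simp [tgt, b1, b2, b3]

lemma cnt_dev_nat {g kk z : ℕ} [NeZero g] {L : List NT} (h : chk g kk z L = true) (c : Fin 6)
    (a b : (ZMod g ⊕ ℕ) × Bool) :
    cnt c (dev ((L.map (dct g) : List _) : Multiset (Tup ((ZMod g ⊕ ℕ) × Bool)))) a b =
      tgt g kk z c (nk g (enc a) (enc b)) := by
  by_cases hab : a.1.isRight ∧ b.1.isRight
  · have h0 := chk_cn h c (4 * g)
    have ht : tgt g kk z c (4 * g) = 0 := by
      have hg : 0 < g := NeZero.pos g
      have b1 : Nat.blt (4 * g) 4 = false := by rw [← Bool.not_eq_true, Nat.blt_eq]; omega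
      simp [tgt, b1]
    have hn : nk g (enc a) (enc b) = 4 * g := by
      obtain ⟨a, i⟩ := a
      obtain ⟨b, j⟩ := b
      rcases a with a | a <;> rcases b with b | b <;> simp at hab
      have : ∀ (a : ℕ) (i : Bool), Nat.blt ((2 * (g + a) + i.toNat) / 2) g = false := by
        intro a i
        rw [← Bool.not_eq_true, Nat.blt_eq]; omega
      simp [nk, enc, this]
    rw [hn, ht]
    rw [ht, cn_eq, Nat.add_eq_zero_iff] at h0
    have hz : ∀ p q, (dc g p).1.isRight ∧ (dc g q).1.isRight → nk g p q = 4 * g := by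
      intro p q ⟨h1, h2⟩
      have h1 : ¬ p / 2 < g := by
        intro h; simp [dc, h] at h1
      have h2 : ¬ q / 2 < g := by
        intro h; simp [dc, h] at h2
      have h1 : Nat.blt (p / 2) g = false := by rw [← Bool.not_eq_true, Nat.blt_eq]; exact h1
      have h2 : Nat.blt (q / 2) g = false := by rw [← Bool.not_eq_true, Nat.blt_eq]; exact h2
      simp [nk, h1, h2]
    rw [cnt, pc_dev_none _ _ _ _ _ hab, pc_dev_none _ _ _ _ _ hab]
    · intro t ht
      obtain ⟨t', ht', rfl⟩ := List.mem_map.1 (Multiset.mem_coe.1 ht)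
      obtain ⟨e, he1, he2⟩ := ksel_eq g c t'
      rw [he1]
      intro hc
      have h3 := List.sum_eq_zero_iff.1 h0.2 _ (List.mem_map.2 ⟨t', ht', rfl⟩)
      rw [ind_eq_zero, he2] at h3
      exact h3 (hz _ _ hc)
    · intro t ht
      obtain ⟨t', ht', rfl⟩ := List.mem_map.1 (Multiset.mem_coe.1 ht)
      obtain ⟨e, he1, he2⟩ := ksel_eq g c t'
      rw [he1]
      intro hc
      have h3 := List.sum_eq_zero_iff.1 h0.1 _ (List.mem_map.2 ⟨t', ht', rfl⟩)
      rw [ind_eq_zero, he2] at h3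
      exact h3 (hz _ _ hc)
  · rw [← chk_cn h c _, cn_eq, cnt, pc_dev' _ _ _ _ _ hab,
      pc_dev' _ _ _ _ _ hab, Multiset.map_coe, Multiset.map_coe, Multiset.sum_coe,
      Multiset.sum_coe, List.map_map, List.map_map]
    congr 2
    · apply List.map_congr_left
      intro t _
      obtain ⟨e, he1, he2⟩ := ksel_eq g c t
      rw [Function.comp, he1, he2, sk_iff _ _ _ _ hab]
    · apply List.map_congr_left
      intro t _
      obtain ⟨e, he1, he2⟩ := ksel_eq g c t
      rw [Function.comp, he1, he2, sk_iff _ _ _ _ hab]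

end MD

namespace MD

lemma blt_dec (x y : ℕ) : Nat.blt x y = decide (x < y) := by
  rw [Bool.eq_iff_iff, Nat.blt_eq, decide_eq_true_iff]

lemma beq_dec (x y : ℕ) : Nat.beq x y = decide (x = y) := by
  rw [Bool.eq_iff_iff, Nat.beq_eq, decide_eq_true_iff]

lemma tgt_eq {g kk z : ℕ} [NeZero g] (c : Fin 6) (a b : (ZMod g ⊕ ℕ) × Bool) :
    tgt g kk z c (nk g (enc a) (enc b)) =
      match a.1, b.1 with
      | .inl x, .inl y => if x = y then z * hole c a.2 b.2 else 1
      | .inl _, .inr n => if n < kk then 1 else 0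
      | .inr n, .inl _ => if n < kk then 1 else 0
      | .inr _, .inr _ => 0 := by
  obtain ⟨a, i⟩ := a
  obtain ⟨b, j⟩ := b
  have e2 : ∀ (x : ℕ) (i : Bool), (2 * x + i.toNat) / 2 = x := by
    intro x i; have : i.toNat < 2 := by cases i <;> decide
    omega
  have e3 : ∀ (x : ℕ) (i : Bool), (2 * x + i.toNat) % 2 = i.toNat := by
    intro x i; have : i.toNat < 2 := by cases i <;> decide
    omega
  have hi : i.toNat < 2 := by cases i <;> decide
  have hj : j.toNat < 2 := by cases j <;> decide
  have hg : 0 < g := NeZero.pos g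
  have hv : ∀ x : ZMod g, x.val < g := fun x => ZMod.val_lt x
  have bl3 : ∀ n, ¬ g + n < g := by intro n; omega
  rcases a with x | x <;> rcases b with y | y <;>
    simp only [nk, enc, e2, e3, blt_dec, hv, bl3, Nat.add_sub_cancel_left, decide_true, decide_false, cond_true,
      cond_false]
  · by_cases hxy : x = y
    · subst hxy
      have h0 : (x.val + (g - x.val)) % g = 0 := by
        rw [Nat.add_sub_cancel' (hv x).le, Nat.mod_self]
      rw [h0]
      have h1 : 4 * 0 + (2 * i.toNat + j.toNat) < 4 := by omega
      simp only [tgt, blt_dec, h1, decide_true, cond_true]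
      simp only [if_true]
      congr 1
      clear h1 hi hj
      fin_cases c <;> cases i <;> cases j <;> rfl
    · have h0 : (y.val + (g - x.val)) % g ≠ 0 := by
        intro h
        apply hxy
        have h3 : ((y.val + (g - x.val) : ℕ) : ZMod g) = 0 := by
          rw [ZMod.natCast_eq_zero_iff]; exact Nat.dvd_of_mod_eq_zero h
        rw [Nat.cast_add, Nat.cast_sub (hv x).le, ZMod.natCast_self, ZMod.natCast_zmod_val,
          ZMod.natCast_zmod_val] at h3
        have : y - x = 0 := by rw [← h3]; ring
        exact (sub_eq_zero.1 this).symm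
      have h4 : (y.val + (g - x.val)) % g < g := Nat.mod_lt _ hg
      have h1 : ¬ 4 * ((y.val + (g - x.val)) % g) + (2 * i.toNat + j.toNat) < 4 := by omega
      have h2 : 4 * ((y.val + (g - x.val)) % g) + (2 * i.toNat + j.toNat) < 4 * g + 8 * kk + 1 := by omega
      have h5 : ¬ 4 * ((y.val + (g - x.val)) % g) + (2 * i.toNat + j.toNat) = 4 * g := by omega
      simp only [tgt, blt_dec, beq_dec, h1, h2, h5, decide_true, decide_false, cond_true, cond_false]
      simp [hxy]
  · have h1 : ¬ (4 * g + 8 * y + 5 + (2 * i.toNat + j.toNat) < 4) := by omega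
    have h2 : ¬ (4 * g + 8 * y + 5 + (2 * i.toNat + j.toNat) = 4 * g) := by omega
    have h3 : (4 * g + 8 * y + 5 + (2 * i.toNat + j.toNat) < 4 * g + 8 * kk + 1) ↔ y < kk := by omega
    simp only [tgt, blt_dec, beq_dec, h1, h2, h3, decide_true, decide_false, cond_true, cond_false]
    by_cases h : y < kk <;> simp [h]
  · have h1 : ¬ (4 * g + 8 * x + 1 + (2 * i.toNat + j.toNat) < 4) := by omega
    have h2 : ¬ (4 * g + 8 * x + 1 + (2 * i.toNat + j.toNat) = 4 * g) := by omega
    have h3 : (4 * g + 8 * x + 1 + (2 * i.toNat + j.toNat) < 4 * g + 8 * kk + 1) ↔ x < kk := by omega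
    simp only [tgt, blt_dec, beq_dec, h1, h2, h3, decide_true, decide_false, cond_true, cond_false]
    by_cases h : x < kk <;> simp [h]
  · have h1 : ¬ (4 * g < 4) := by omega
    simp [tgt, blt_dec, h1]


/-- the point set -/
def PS (g k : ℕ) [NeZero g] : Finset (ZMod g ⊕ ℕ) := Finset.univ.disjSum (Finset.range k)

lemma PS_card (g k : ℕ) [NeZero g] : (PS g k).card = g + k := by
  simp [PS, ZMod.card]

lemma PrN_of_chk (g k : ℕ) [NeZero g] (L : List NT) (hk : PrN k) (h : chk g k 1 L = true) :
    PrN (g + k) := by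
  have hc : ((∅ : Finset (ZMod g)).disjSum (Finset.range k)).card = k := by simp
  obtain ⟨N, hN⟩ := PrOn_of_N ((∅ : Finset (ZMod g)).disjSum (Finset.range k)) (by rw [hc]; exact hk)
  refine PrN_of (PS g k) (PS_card g k)
    ⟨dev ((L.map (dct g) : List _) : Multiset (Tup ((ZMod g ⊕ ℕ) × Bool))) + N,
      fun c a b => ?_⟩
  rw [cnt_add, cnt_dev_nat h, tgt_eq, hN]
  obtain ⟨a, i⟩ := a
  obtain ⟨b, j⟩ := b
  rcases a with a | a <;> rcases b with b | b <;> simp [PS]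

lemma FrN_of_chk (g k : ℕ) [NeZero g] (L : List NT) (hk : FrN k) (h : chk g k 0 L = true) :
    FrN (g + k) := by
  have hc : ((∅ : Finset (ZMod g)).disjSum (Finset.range k)).card = k := by simp
  obtain ⟨N, hN⟩ := FrOn_of_N ((∅ : Finset (ZMod g)).disjSum (Finset.range k)) (by rw [hc]; exact hk)
  refine FrN_of (PS g k) (PS_card g k)
    ⟨dev ((L.map (dct g) : List _) : Multiset (Tup ((ZMod g ⊕ ℕ) × Bool))) + N,
      fun c a b => ?_⟩
  rw [cnt_add, cnt_dev_nat h, tgt_eq, hN]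
  obtain ⟨a, i⟩ := a
  obtain ⟨b, j⟩ := b
  rcases a with a | a <;> rcases b with b | b <;> simp [PS]

end MD

namespace MD

/-- swap the two copies -/
def tw (x : ℕ) : ℕ := Nat.xor x 1

def dl (g x : ℕ) : ℕ := bif Nat.blt x (2 * g) then x else tw x

/-- expansion of a list of base games under the two symmetries -/
def exH (g : ℕ) : List (ℕ × ℕ × ℕ × ℕ) → List NT
  | [] => []
  | (a, b, c, d) :: l =>
    (0, a, b, c, d) :: (0, tw a, tw b, tw c, tw d) ::
    (1, dl g b, dl g a, dl g d, dl g c) ::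
    (1, tw (dl g b), tw (dl g a), tw (dl g d), tw (dl g c)) :: exH g l

def exT (g r : ℕ) : List (ℕ × ℕ × ℕ × ℕ) → List NT
  | [] => []
  | (a, b, c, d) :: l =>
    (r, a, b, c, d) :: (r + 1, tw a, tw b, tw c, tw d) ::
    (r + 2, b, a, d, c) :: (r + 3, tw b, tw a, tw d, tw c) :: exT g (r + 4) l

def exF (g : ℕ) (H T : List (ℕ × ℕ × ℕ × ℕ)) : List NT := exH g H ++ exT g (2 * g) T

def exP (g : ℕ) (H T : List (ℕ × ℕ × ℕ × ℕ)) : List NT :=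
  (2 * g, 0, 0, 1, 1) :: (2 * g + 1, 0, 1, 1, 0) :: (exH g H ++ exT g (2 * g + 2) T)

lemma PrN_ex (g k : ℕ) [NeZero g] (H T : List (ℕ × ℕ × ℕ × ℕ)) (hk : PrN k)
    (h : chk g k 1 (exP g H T) = true) : PrN (g + k) := PrN_of_chk g k _ hk h

lemma FrN_ex (g k : ℕ) [NeZero g] (H T : List (ℕ × ℕ × ℕ × ℕ)) (hk : FrN k)
    (h : chk g k 0 (exF g H T) = true) : PrN (g + k) := PrN_of_FrN (FrN_of_chk g k _ hk h)

lemma FrN_zero : FrN 0 := FrOn_le_one _ (by simp)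
lemma FrN_one : FrN 1 := FrOn_le_one _ (by simp)

lemma FrN_6 : FrN 6 := FrN_of_chk 5 1 [
    (0, 11, 6, 2, 5), (0, 10, 7, 9, 3), (0, 4, 10, 3, 9), (0, 6, 11, 8, 4), (0, 7, 8, 5, 2),
    (1, 10, 6, 4, 8), (1, 11, 9, 7, 2), (1, 3, 10, 6, 4), (1, 9, 11, 5, 3), (1, 8, 5, 2, 7),
    (10, 0, 9, 3, 6), (11, 0, 2, 5, 7)]
    FrN_one (by decide +kernel)

lemma FrN_8 : FrN 8 := FrN_of_chk 7 1 [
    (0, 2, 9, 10, 13), (1, 9, 2, 13, 10), (0, 3, 5, 12, 11), (1, 5, 3, 11, 12),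
    (0, 4, 8, 15, 12), (1, 8, 4, 12, 15), (0, 5, 10, 14, 7), (1, 7, 14, 10, 5),
    (0, 6, 4, 13, 2), (1, 2, 13, 4, 6), (0, 7, 15, 9, 3), (1, 3, 9, 15, 7), (0, 8, 14, 11, 6),
    (1, 6, 11, 14, 8), (14, 0, 8, 13, 3), (15, 0, 6, 9, 5)]
    FrN_one (by decide +kernel)

lemma PrN_10 : PrN 10 := PrN_ex 9 1 [
    (0, 4, 2, 8), (4, 15, 11, 16), (8, 0, 13, 11), (18, 6, 15, 12), (16, 18, 6, 3)]
    [] PrN_one (by decide +kernel)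

lemma PrN_12 : PrN 12 := PrN_ex 11 1 [
    (8, 21, 16, 19), (14, 2, 20, 6), (12, 10, 19, 15), (0, 5, 10, 16), (22, 8, 6, 1),
    (2, 22, 5, 12)]
    [] PrN_one (by decide +kernel)

lemma PrN_14 : PrN 14 := PrN_ex 13 1 [
    (0, 6, 19, 11), (6, 17, 8, 13), (2, 9, 10, 22), (4, 14, 16, 20), (14, 3, 24, 0),
    (26, 24, 20, 19), (22, 26, 13, 4)]
    [] PrN_one (by decide +kernel)

lemma PrN_15 : PrN 15 := FrN_ex 15 0 [
    (2, 13, 20, 6), (16, 21, 24, 18), (12, 2, 26, 4), (8, 11, 28, 15), (4, 16, 15, 22),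
    (6, 8, 23, 27), (10, 29, 19, 24)]
    [] FrN_zero (by decide +kernel)

lemma PrN_16 : PrN 16 := PrN_ex 15 1 [
    (14, 26, 29, 20), (12, 16, 24, 2), (0, 15, 27, 7), (18, 1, 22, 29), (6, 5, 16, 10),
    (8, 24, 21, 23), (30, 18, 4, 9), (10, 30, 3, 12)]
    [] PrN_one (by decide +kernel)

lemma PrN_18 : PrN 18 := PrN_ex 17 1 [
    (2, 1, 26, 15), (0, 18, 29, 3), (24, 17, 33, 29), (22, 24, 30, 8), (12, 26, 14, 31),
    (8, 32, 19, 4), (16, 22, 20, 11), (34, 20, 10, 7), (4, 34, 7, 12)]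
    [] PrN_one (by decide +kernel)

lemma PrN_20 : PrN 20 := PrN_ex 19 1 [
    (10, 4, 28, 35), (16, 14, 22, 25), (2, 19, 30, 22), (14, 33, 27, 37), (18, 6, 32, 9),
    (34, 0, 36, 12), (8, 21, 24, 29), (4, 26, 21, 3), (38, 10, 0, 31), (12, 38, 7, 16)]
    [] PrN_one (by decide +kernel)

lemma PrN_21 : PrN 21 := FrN_ex 21 0 [
    (10, 26, 32, 17), (6, 24, 36, 19), (26, 22, 30, 28), (24, 21, 38, 5), (18, 31, 41, 38),
    (2, 13, 29, 37), (16, 2, 35, 15), (8, 40, 13, 32), (20, 7, 22, 34), (4, 10, 14, 9)]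
    [] FrN_zero (by decide +kernel)

lemma PrN_22 : PrN 22 := PrN_ex 21 1 [
    (8, 2, 34, 41), (16, 4, 26, 39), (6, 24, 23, 1), (28, 21, 36, 34), (2, 30, 14, 37),
    (0, 26, 13, 8), (10, 6, 31, 12), (4, 15, 18, 17), (20, 10, 24, 32), (42, 28, 32, 19),
    (40, 42, 39, 22)]
    [] PrN_one (by decide +kernel)

lemma PrN_24 : PrN 24 := PrN_ex 23 1 [
    (20, 24, 26, 23), (8, 28, 38, 19), (12, 42, 34, 5), (18, 1, 32, 14), (0, 6, 31, 41),
    (4, 36, 25, 26), (42, 30, 44, 13), (2, 9, 28, 21), (6, 44, 14, 3), (36, 34, 40, 16),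
    (46, 10, 22, 33), (10, 46, 17, 38)]
    [] PrN_one (by decide +kernel)

lemma PrN_26 : PrN 26 := PrN_ex 25 1 [
    (16, 28, 34, 23), (4, 32, 46, 19), (2, 16, 48, 35), (8, 14, 42, 37), (26, 3, 32, 0),
    (22, 25, 36, 27), (20, 39, 29, 13), (14, 40, 39, 31), (0, 43, 31, 46), (6, 8, 19, 48),
    (24, 21, 44, 4), (50, 44, 10, 6), (12, 50, 40, 10)]
    [] PrN_one (by decide +kernel)

lemma PrN_27 : PrN 27 := FrN_ex 27 0 [
    (8, 48, 46, 7), (18, 20, 36, 35), (26, 4, 28, 51), (10, 2, 44, 53), (24, 12, 30, 43),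
    (42, 16, 49, 28), (6, 11, 14, 38), (4, 24, 32, 15), (38, 45, 41, 31), (12, 23, 51, 33),
    (22, 18, 52, 37), (16, 47, 20, 26), (2, 40, 35, 8)]
    [] FrN_zero (by decide +kernel)

lemma PrN_28 : PrN 28 := PrN_ex 27 1 [
    (4, 34, 50, 21), (8, 14, 46, 41), (6, 24, 48, 31), (2, 44, 52, 11), (0, 52, 34, 43),
    (24, 16, 26, 29), (22, 19, 44, 5), (14, 36, 31, 8), (20, 47, 43, 23), (28, 12, 38, 48),
    (18, 39, 37, 33), (10, 1, 13, 50), (54, 26, 17, 3), (40, 54, 33, 7)]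
    [] PrN_one (by decide +kernel)

lemma PrN_30 (PrN_5 : PrN 5) : PrN 30 := PrN_ex 25 5 [
    (18, 14, 32, 37), (2, 20, 48, 31), (12, 24, 38, 27), (4, 38, 46, 13), (0, 7, 16, 45),
    (50, 42, 40, 10), (52, 18, 30, 40), (54, 4, 29, 48), (56, 16, 36, 23), (58, 2, 7, 33),
    (34, 50, 14, 0), (42, 52, 44, 46), (20, 54, 10, 9), (8, 56, 25, 34), (26, 58, 23, 29)]
    [
    (0, 27, 37, 44), (0, 22, 43, 35)] PrN_5 (by decide +kernel)

lemma PrN_32 (PrN_5 : PrN 5) : PrN 32 := PrN_ex 27 5 [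
    (14, 2, 40, 53), (24, 18, 30, 37), (22, 8, 32, 47), (2, 24, 52, 31), (16, 42, 38, 13),
    (34, 10, 46, 28), (54, 40, 48, 32), (56, 0, 37, 38), (58, 34, 45, 14), (60, 44, 0, 5),
    (62, 50, 5, 7), (42, 54, 28, 20), (50, 56, 26, 17), (8, 58, 10, 49), (6, 60, 19, 26),
    (20, 62, 13, 23)]
    [
    (0, 19, 33, 52), (0, 34, 29, 33)] PrN_5 (by decide +kernel)

lemma PrN_33 : PrN 33 := FrN_ex 27 6 [
    (14, 2, 40, 53), (24, 27, 19, 4), (4, 42, 44, 18), (34, 40, 37, 17), (54, 32, 28, 24),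
    (56, 46, 22, 44), (58, 8, 3, 20), (60, 48, 51, 28), (62, 30, 9, 14), (64, 38, 27, 13),
    (32, 54, 42, 6), (12, 56, 30, 22), (38, 58, 6, 11), (20, 60, 16, 51), (46, 62, 52, 37),
    (48, 64, 11, 35)]
    [
    (0, 47, 35, 6), (0, 45, 13, 36), (0, 10, 45, 47)] FrN_6 (by decide +kernel)

lemma PrN_34 (PrN_5 : PrN 5) : PrN 34 := PrN_ex 29 5 [
    (10, 54, 48, 5), (6, 44, 52, 15), (20, 8, 38, 51), (16, 22, 42, 37), (14, 48, 44, 11),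
    (22, 26, 36, 33), (32, 42, 56, 0), (58, 20, 2, 28), (60, 2, 5, 12), (62, 40, 19, 34),
    (64, 18, 34, 7), (66, 16, 40, 39), (0, 58, 54, 46), (28, 60, 30, 53), (24, 62, 46, 57),
    (8, 64, 13, 30), (26, 66, 51, 24)]
    [
    (0, 40, 27, 43), (0, 30, 19, 41)] PrN_5 (by decide +kernel)

lemma PrN_38 (PrN_5 : PrN 5) : PrN 38 := PrN_ex 33 5 [
    (28, 14, 38, 53), (26, 58, 40, 9), (8, 4, 58, 63), (30, 32, 36, 35), (16, 60, 50, 7),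
    (20, 12, 46, 55), (24, 36, 42, 31), (6, 22, 60, 45), (48, 43, 12, 51), (66, 0, 44, 38),
    (68, 24, 4, 28), (70, 48, 23, 2), (72, 46, 1, 11), (74, 16, 3, 21), (32, 66, 56, 18),
    (54, 68, 10, 56), (62, 70, 64, 41), (18, 72, 53, 27), (14, 74, 35, 65)]
    [
    (0, 31, 15, 40), (0, 19, 27, 36)] PrN_5 (by decide +kernel)

lemma PrN_39 : PrN 39 := FrN_ex 33 6 [
    (18, 30, 48, 37), (10, 20, 56, 47), (12, 8, 54, 59), (26, 52, 40, 15), (6, 64, 50, 56),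
    (38, 3, 61, 12), (16, 33, 4, 51), (66, 4, 46, 44), (68, 60, 28, 62), (70, 18, 63, 24),
    (72, 48, 59, 16), (74, 6, 44, 11), (76, 40, 35, 55), (32, 66, 42, 26), (36, 68, 8, 38),
    (2, 70, 64, 43), (30, 72, 14, 23), (24, 74, 23, 28), (20, 76, 53, 35)]
    [
    (0, 15, 59, 56), (0, 52, 55, 17), (0, 24, 21, 43)] FrN_6 (by decide +kernel)

lemma PrN_44 (PrN_5 : PrN 5) : PrN 44 := PrN_ex 39 5 [
    (12, 44, 66, 35), (6, 28, 72, 51), (16, 22, 62, 57), (32, 52, 46, 27), (14, 2, 64, 77),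
    (10, 40, 68, 39), (34, 32, 44, 47), (36, 74, 42, 5), (4, 66, 74, 13), (30, 72, 48, 7),
    (18, 70, 60, 9), (56, 61, 25, 42), (78, 10, 70, 62), (80, 48, 28, 18), (82, 68, 51, 64),
    (84, 54, 59, 14), (86, 20, 41, 59), (76, 78, 20, 24), (38, 80, 22, 36), (52, 82, 8, 17),
    (0, 84, 2, 31), (26, 86, 55, 1)]
    [
    (0, 25, 21, 30), (0, 34, 37, 65)] PrN_5 (by decide +kernel)

lemma PrN_50 (PrN_7 : PrN 7) : PrN 50 := PrN_ex 43 7 [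
    (8, 2, 78, 85), (38, 6, 48, 81), (28, 66, 58, 21), (32, 34, 54, 53), (20, 64, 66, 23),
    (34, 26, 52, 61), (42, 72, 44, 15), (18, 32, 68, 55), (6, 58, 80, 29), (62, 42, 57, 17),
    (46, 56, 70, 12), (86, 30, 60, 44), (88, 8, 40, 36), (90, 4, 17, 0), (92, 40, 23, 48),
    (94, 78, 85, 18), (96, 62, 14, 25), (98, 76, 25, 75), (4, 86, 36, 10), (2, 88, 82, 70),
    (26, 90, 74, 51), (12, 92, 64, 83), (76, 94, 10, 39), (30, 96, 51, 46), (72, 98, 1, 69)]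
    [
    (0, 75, 51, 4), (0, 64, 9, 33), (0, 65, 77, 40)] PrN_7 (by decide +kernel)

lemma PrN_51 : PrN 51 := FrN_ex 45 6 [
    (18, 58, 72, 33), (4, 64, 86, 27), (32, 14, 58, 77), (12, 54, 78, 37), (24, 70, 66, 21),
    (28, 12, 62, 79), (14, 24, 76, 67), (6, 42, 84, 49), (22, 60, 68, 31), (10, 44, 80, 47),
    (2, 72, 57, 81), (26, 23, 17, 38), (40, 17, 36, 69), (90, 62, 46, 52), (92, 10, 42, 50),
    (94, 34, 44, 56), (96, 40, 35, 8), (98, 4, 61, 88), (100, 74, 65, 87), (74, 90, 88, 2),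
    (48, 92, 30, 28), (52, 94, 54, 82), (82, 96, 8, 85), (50, 98, 20, 19), (70, 100, 39, 7)]
    [
    (0, 21, 77, 88), (0, 83, 21, 26), (0, 26, 87, 73)] FrN_6 (by decide +kernel)

lemma PrN_52 (PrN_7 : PrN 7) : PrN 52 := PrN_ex 45 7 [
    (6, 70, 84, 21), (2, 38, 88, 53), (42, 76, 48, 15), (30, 80, 60, 11), (24, 2, 66, 89),
    (28, 16, 62, 75), (26, 86, 64, 5), (20, 36, 70, 55), (8, 66, 82, 25), (38, 44, 52, 47),
    (36, 29, 10, 73), (44, 1, 55, 6), (90, 50, 46, 26), (92, 84, 4, 56), (94, 62, 80, 8),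
    (96, 40, 17, 30), (98, 22, 19, 42), (100, 18, 78, 83), (102, 64, 32, 35), (0, 90, 58, 12),
    (34, 92, 56, 58), (74, 94, 72, 68), (86, 96, 68, 49), (22, 98, 14, 33), (76, 100, 41, 78),
    (12, 102, 51, 60)]
    [
    (0, 66, 25, 33), (0, 14, 45, 3), (0, 10, 17, 79)] PrN_7 (by decide +kernel)

lemma PrN_54 (PrN_7 : PrN 7) : PrN 54 := PrN_ex 47 7 [
    (16, 70, 78, 25), (12, 8, 82, 87), (36, 44, 58, 51), (32, 38, 62, 57), (30, 20, 64, 75),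
    (10, 28, 84, 67), (38, 40, 56, 55), (2, 80, 92, 15), (22, 68, 72, 27), (26, 58, 68, 37),
    (28, 64, 66, 31), (74, 23, 5, 48), (44, 33, 50, 73), (94, 42, 48, 6), (96, 18, 90, 16),
    (98, 88, 42, 4), (100, 76, 19, 92), (102, 2, 71, 84), (104, 78, 20, 91), (106, 82, 89, 63),
    (14, 94, 80, 46), (52, 96, 60, 10), (0, 98, 46, 34), (6, 100, 86, 53), (8, 102, 34, 61),
    (76, 104, 41, 12), (54, 106, 25, 1)]
    [
    (0, 57, 85, 54), (0, 64, 33, 61), (0, 14, 45, 23)] PrN_7 (by decide +kernel)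

lemma PrN_56 (PrN_7 : PrN 7) : PrN 56 := PrN_ex 49 7 [
    (4, 50, 94, 49), (6, 94, 92, 5), (44, 14, 54, 85), (10, 28, 88, 71), (36, 72, 62, 27),
    (18, 68, 80, 31), (20, 52, 78, 47), (46, 88, 52, 11), (24, 82, 74, 17), (30, 54, 68, 45),
    (28, 20, 70, 79), (22, 42, 76, 57), (96, 0, 43, 65), (32, 38, 34, 8), (98, 76, 48, 60),
    (100, 80, 14, 58), (102, 22, 51, 36), (104, 92, 1, 12), (106, 34, 65, 66), (108, 2, 84, 25),
    (110, 74, 91, 7), (38, 98, 66, 32), (60, 100, 56, 40), (72, 102, 8, 91), (12, 104, 58, 87),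
    (16, 106, 40, 63), (86, 108, 83, 18), (2, 110, 27, 97)]
    [
    (0, 27, 73, 76), (0, 94, 19, 79), (0, 7, 87, 42)] PrN_7 (by decide +kernel)

lemma PrN_57 : PrN 57 := FrN_ex 51 6 [
    (4, 88, 98, 15), (16, 30, 86, 73), (40, 48, 62, 55), (22, 98, 80, 5), (8, 66, 94, 37),
    (24, 26, 78, 77), (28, 68, 74, 35), (38, 10, 64, 93), (30, 50, 72, 53), (44, 94, 58, 9),
    (50, 82, 52, 21), (6, 84, 96, 19), (46, 24, 56, 79), (14, 86, 61, 7), (36, 96, 70, 32),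
    (90, 100, 84, 28), (102, 60, 26, 42), (104, 62, 43, 58), (106, 90, 93, 38),
    (108, 64, 49, 2), (110, 46, 66, 71), (112, 74, 13, 17), (88, 102, 68, 80),
    (54, 104, 18, 13), (10, 106, 34, 45), (2, 108, 76, 41), (100, 110, 83, 22),
    (32, 112, 21, 57)]
    [
    (0, 65, 27, 60), (0, 91, 33, 2), (0, 6, 11, 45)] FrN_6 (by decide +kernel)

lemma PrN_58 (PrN_7 : PrN 7) : PrN 58 := PrN_ex 51 7 [
    (28, 66, 74, 37), (44, 54, 58, 49), (42, 10, 60, 93), (36, 86, 66, 17), (46, 44, 56, 59),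
    (12, 28, 90, 75), (6, 52, 96, 51), (14, 2, 88, 101), (34, 82, 68, 21), (4, 30, 98, 73),
    (2, 46, 100, 57), (38, 4, 64, 99), (18, 60, 84, 43), (16, 38, 1, 15), (94, 13, 92, 63),
    (102, 96, 20, 0), (104, 26, 62, 70), (106, 40, 8, 80), (108, 24, 51, 78), (110, 88, 23, 18),
    (112, 34, 24, 7), (114, 8, 81, 85), (52, 102, 72, 90), (76, 104, 54, 94), (70, 106, 32, 68),
    (26, 108, 10, 33), (82, 110, 40, 65), (78, 112, 31, 22), (86, 114, 49, 77)]
    [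
    (0, 24, 81, 75), (0, 97, 69, 6), (0, 37, 59, 72)] PrN_7 (by decide +kernel)

end MD

namespace MD

section grp
variable {G : Type} [AddCommGroup G] [Fintype G]

lemma sum_ind_mem (S : Finset G) (y : G) : ∑ x ∈ S, ind (x = y) = ind (y ∈ S) := by
  by_cases h : y ∈ S
  · rw [Finset.sum_eq_single y (fun b _ hb => ind_false hb) (fun h' => absurd h h'), ind_true rfl,
      ind_true h]
  · rw [ind_false h]
    refine Finset.sum_eq_zero (fun x hx => ind_false ?_)
    rintro rfl; exact h hx

lemma half_key (S : Finset G) (h0 : (0 : G) ∉ S) (hS : ∀ x, x ≠ 0 → (x ∈ S ↔ -x ∉ S))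
    (c : G →+ G) (hc : Function.Injective c) (f f' : G → G) (d : G)
    (hf : ∀ x, f x = c x) (hf' : ∀ x, f' x = -c x) :
    ∑ x ∈ S, ind (f x = d) + ∑ x ∈ S, ind (f' x = d) = ind (d ≠ 0) := by
  obtain ⟨y, rfl⟩ := Finite.surjective_of_injective hc d
  have e1 : ∀ x, f x = c y ↔ x = y := fun x => by rw [hf, hc.eq_iff]
  have e2 : ∀ x, f' x = c y ↔ x = -y := fun x => by
    rw [hf', neg_eq_iff_eq_neg, ← map_neg, hc.eq_iff]
  simp only [e1, e2, sum_ind_mem, ne_eq, map_eq_zero_iff c hc]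
  by_cases hy : y = 0
  · subst hy; simp [ind, h0]
  · have := hS y hy
    rw [ind_true hy]
    by_cases hy' : y ∈ S
    · rw [ind_true hy', ind_false (this.1 hy')]
    · rw [ind_false hy', ind_true]
      by_contra h; exact hy' (this.2 h)

def g1 (u : G →+ G) (x : G) : Tup ((G ⊕ ℕ) × Bool) :=
  ![(.inl 0, false), (.inl x, false), (.inl (u x), false), (.inl (-x), false), (.inl (-u x), true)]
def g2 (u : G →+ G) (x : G) : Tup ((G ⊕ ℕ) × Bool) :=
  ![(.inl 0, false), (.inl x, true), (.inl (u x), true), (.inl (-x), true), (.inl (-u x), false)]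
def g3 (u : G →+ G) (x : G) : Tup ((G ⊕ ℕ) × Bool) :=
  ![(.inl 0, true), (.inl (u x), false), (.inl x, false), (.inl (-u x), true), (.inl (-x), false)]
def g4 (u : G →+ G) (x : G) : Tup ((G ⊕ ℕ) × Bool) :=
  ![(.inl 0, true), (.inl (-u x), false), (.inl (-x), true), (.inl (u x), true), (.inl x, true)]

def gL (u : G →+ G) (S : Finset G) : Multiset (Tup ((G ⊕ ℕ) × Bool)) :=
  S.val.map (g1 u) + S.val.map (g2 u) + S.val.map (g3 u) + S.val.map (g4 u)

theorem FrN_group (u : G →+ G) (S : Finset G) (h0 : (0 : G) ∉ S)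
    (hS : ∀ x, x ≠ 0 → (x ∈ S ↔ -x ∉ S))
    (hu : Function.Injective u)
    (h2 : Function.Injective (AddMonoidHom.id G + AddMonoidHom.id G))
    (hp : Function.Injective (u + AddMonoidHom.id G))
    (hm : Function.Injective (u - AddMonoidHom.id G)) : FrN (Fintype.card G) := by
  have h2u : Function.Injective (u + u) := by
    have : (u + u) = (AddMonoidHom.id G + AddMonoidHom.id G).comp u := by ext; simp
    rw [this]
    exact h2.comp hu
  refine FrN_of ((Finset.univ : Finset G).disjSum (∅ : Finset ℕ)) ?_ ⟨dev (gL u S), ?_⟩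
  · simp
  have hn : ∀ t ∈ gL u S, ∀ p, (t p).1.isRight = false := by
    intro t ht p
    simp only [gL, Multiset.mem_add, Multiset.mem_map] at ht
    rcases ht with ((⟨x, _, rfl⟩ | ⟨x, _, rfl⟩) | ⟨x, _, rfl⟩) | ⟨x, _, rfl⟩ <;>
      fin_cases p <;> simp [g1, g2, g3, g4]
  rintro k ⟨a, i⟩ ⟨b, j⟩
  by_cases hab : a.isRight ∧ b.isRight
  · rw [cnt, pc_dev_none _ _ _ _ _ hab (fun t ht h => by simp [hn t ht] at h),
      pc_dev_none _ _ _ _ _ hab (fun t ht h => by simp [hn t ht] at h)]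
    obtain ⟨x, hx⟩ := Sum.isRight_iff.1 hab.1
    simp [hx]
  · rw [cnt, pc_dev' _ _ _ _ _ hab, pc_dev' _ _ _ _ _ hab]
    have hz : ∀ p q, (a.isRight ∨ b.isRight) →
        ((gL u S).map (fun t => ind (sk (t p) (t q) (a, i) (b, j)))).sum = 0 := by
      intro p q hor
      rw [Multiset.sum_eq_zero_iff]
      intro n hn'
      obtain ⟨t, ht, rfl⟩ := Multiset.mem_map.1 hn'
      rw [ind_eq_zero]
      rintro ⟨-, -, h3⟩
      have h1 := hn t ht p
      have h2 := hn t ht q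
      rcases hp' : (t p).1 with x | x
      · rcases hq' : (t q).1 with y | y
        · rw [hp', hq'] at h3
          rcases a with a | a <;> rcases b with b | b
          · simp at hor
          all_goals exact h3
        · rw [hq'] at h2; simp at h2
      · rw [hp'] at h1; simp at h1
    rcases a with a | a
    swap
    · simp [hz]
    rcases b with b | b
    swap
    · simp [hz]
    have key := half_key S h0 hS
    have k1 := key (AddMonoidHom.id G) Function.injective_id
    have k2 := key _ h2
    have k3 := key _ hu
    have k4 := key _ hp
    have k5 := key _ hm
    have k6 := key _ h2u
    trans ind (b - a ≠ 0)
    swap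
    · by_cases h : a = b
      · rw [ind_false (by simp [h]), if_neg (by simp [h])]
      · rw [ind_true (sub_ne_zero.2 (Ne.symm h)), if_pos (by simp [h])]
    have f0 : ind False = 0 := ind_false id
    have hs : ∀ p q, ((gL u S).map (fun t => ind (sk (t p) (t q) (.inl a, i) (.inl b, j)))).sum =
        ∑ x ∈ S, ind (sk (g1 u x p) (g1 u x q) (.inl a, i) (.inl b, j)) +
        ∑ x ∈ S, ind (sk (g2 u x p) (g2 u x q) (.inl a, i) (.inl b, j)) +
        ∑ x ∈ S, ind (sk (g3 u x p) (g3 u x q) (.inl a, i) (.inl b, j)) +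
        ∑ x ∈ S, ind (sk (g4 u x p) (g4 u x q) (.inl a, i) (.inl b, j)) := by
      intro p q
      simp only [gL, Multiset.map_add, Multiset.sum_add, Multiset.map_map]
      rfl
    rw [hs, hs]
    clear hs hz hn hab
    fin_cases k <;> cases i <;> cases j <;>
      simp only [g1, g2, g3, g4, cols, sk, okp, Matrix.cons_val, Fin.isValue, reduceCtorEq,
        false_and, true_and, and_false, f0, Finset.sum_const_zero, add_zero, zero_add,
        Fin.mk_zero, Fin.zero_eta, Fin.mk_one, Fin.reduceFinMk] <;>
      first
      | (refine k1 _ _ _ ?_ ?_ <;> (intro x; (try simp only [AddMonoidHom.add_apply, AddMonoidHom.sub_apply, AddMonoidHom.id_apply]); first | done | rfl | abel1 | exact (neg_sub _ _).symm | exact (sub_zero _)))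
      | (rw [add_comm]; refine k1 _ _ _ ?_ ?_ <;> (intro x; (try simp only [AddMonoidHom.add_apply, AddMonoidHom.sub_apply, AddMonoidHom.id_apply]); first | done | rfl | abel1 | exact (neg_sub _ _).symm | exact (sub_zero _)))
      | (refine k2 _ _ _ ?_ ?_ <;> (intro x; (try simp only [AddMonoidHom.add_apply, AddMonoidHom.sub_apply, AddMonoidHom.id_apply]); first | done | rfl | abel1 | exact (neg_sub _ _).symm | exact (sub_zero _)))
      | (rw [add_comm]; refine k2 _ _ _ ?_ ?_ <;> (intro x; (try simp only [AddMonoidHom.add_apply, AddMonoidHom.sub_apply, AddMonoidHom.id_apply]); first | done | rfl | abel1 | exact (neg_sub _ _).symm | exact (sub_zero _)))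
      | (refine k3 _ _ _ ?_ ?_ <;> (intro x; (try simp only [AddMonoidHom.add_apply, AddMonoidHom.sub_apply, AddMonoidHom.id_apply]); first | done | rfl | abel1 | exact (neg_sub _ _).symm | exact (sub_zero _)))
      | (rw [add_comm]; refine k3 _ _ _ ?_ ?_ <;> (intro x; (try simp only [AddMonoidHom.add_apply, AddMonoidHom.sub_apply, AddMonoidHom.id_apply]); first | done | rfl | abel1 | exact (neg_sub _ _).symm | exact (sub_zero _)))
      | (refine k4 _ _ _ ?_ ?_ <;> (intro x; (try simp only [AddMonoidHom.add_apply, AddMonoidHom.sub_apply, AddMonoidHom.id_apply]); first | done | rfl | abel1 | exact (neg_sub _ _).symm | exact (sub_zero _)))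
      | (rw [add_comm]; refine k4 _ _ _ ?_ ?_ <;> (intro x; (try simp only [AddMonoidHom.add_apply, AddMonoidHom.sub_apply, AddMonoidHom.id_apply]); first | done | rfl | abel1 | exact (neg_sub _ _).symm | exact (sub_zero _)))
      | (refine k5 _ _ _ ?_ ?_ <;> (intro x; (try simp only [AddMonoidHom.add_apply, AddMonoidHom.sub_apply, AddMonoidHom.id_apply]); first | done | rfl | abel1 | exact (neg_sub _ _).symm | exact (sub_zero _)))
      | (rw [add_comm]; refine k5 _ _ _ ?_ ?_ <;> (intro x; (try simp only [AddMonoidHom.add_apply, AddMonoidHom.sub_apply, AddMonoidHom.id_apply]); first | done | rfl | abel1 | exact (neg_sub _ _).symm | exact (sub_zero _)))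
      | (refine k6 _ _ _ ?_ ?_ <;> (intro x; (try simp only [AddMonoidHom.add_apply, AddMonoidHom.sub_apply, AddMonoidHom.id_apply]); first | done | rfl | abel1 | exact (neg_sub _ _).symm | exact (sub_zero _)))
      | (rw [add_comm]; refine k6 _ _ _ ?_ ?_ <;> (intro x; (try simp only [AddMonoidHom.add_apply, AddMonoidHom.sub_apply, AddMonoidHom.id_apply]); first | done | rfl | abel1 | exact (neg_sub _ _).symm | exact (sub_zero _)))

end grp
end MD

namespace MD

lemma unit_cast (n a : ℕ) (h : a.Coprime n) (x : ZMod n) (hx : (a : ZMod n) * x = 0) : x = 0 := by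
  have := (ZMod.unitOfCoprime a h).isUnit
  rw [ZMod.coe_unitOfCoprime] at this
  exact (this.mul_right_eq_zero).1 hx

theorem FrN_cop (n : ℕ) (hn : n ≠ 0) (h2 : Nat.Coprime 2 n) (h3 : Nat.Coprime 3 n) : FrN n := by
  haveI : NeZero n := ⟨hn⟩
  have hodd : n % 2 = 1 := by
    rw [Nat.coprime_two_left, Nat.odd_iff] at h2; exact h2
  have key := FrN_group (G := ZMod n) (AddMonoidHom.mulLeft 2)
    (Finset.univ.filter (fun x => 0 < x.val ∧ 2 * x.val < n)) (by simp)
    (by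
      intro x hx
      have h1 : x.val ≠ 0 := by rwa [Ne, ZMod.val_eq_zero]
      have h4 := ZMod.val_lt x
      simp only [Finset.mem_filter, Finset.mem_univ, true_and, ZMod.neg_val, if_neg hx]
      omega)
    (by
      rw [injective_iff_map_eq_zero]
      intro x hx
      exact unit_cast n 2 h2 x (by simpa using hx))
    (by
      rw [injective_iff_map_eq_zero]
      intro x hx
      refine unit_cast n 2 h2 x ?_
      have : x + x = 0 := by simpa using hx
      rw [← this]; push_cast; ring)
    (by
      rw [injective_iff_map_eq_zero]
      intro x hx
      refine unit_cast n 3 h3 x ?_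
      have : 2 * x + x = 0 := by simpa using hx
      rw [← this]; push_cast; ring)
    (by
      rw [injective_iff_map_eq_zero]
      intro x hx
      have : 2 * x - x = 0 := by simpa using hx
      rw [← this]; ring)
  rwa [ZMod.card] at key

theorem FrN_9 : FrN 9 := by
  let u : ZMod 3 × ZMod 3 →+ ZMod 3 × ZMod 3 :=
    { toFun := fun p => (-p.2, p.1), map_zero' := by simp, map_add' := by
        intro a b; simp [add_comm] }
  have key := FrN_group (G := ZMod 3 × ZMod 3) u {(1, 0), (0, 1), (1, 1), (1, 2)}
    (by decide) (by decide) (by decide)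
    (by
      show Function.Injective (fun p : ZMod 3 × ZMod 3 => p + p)
      decide)
    (by
      show Function.Injective (fun p : ZMod 3 × ZMod 3 => (-p.2, p.1) + p)
      decide)
    (by
      show Function.Injective (fun p : ZMod 3 × ZMod 3 => (-p.2, p.1) - p)
      decide)
  have hc : Fintype.card (ZMod 3 × ZMod 3) = 9 := by simp [ZMod.card]
  rwa [hc] at key

end MD

namespace MD

section td
variable (m : ℕ) [NeZero m] (c : Fin 7 → ℕ)

def tdS : Finset (Fin 7 × ZMod m) := Finset.univ.filter (fun p => p.2.val < c p.1)

def tdB : (ZMod m × ZMod m) ⊕ Fin 7 → Finset (Fin 7 × ZMod m)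
  | .inl q => (tdS m c).filter (fun p => p.2 = q.1 + (p.1.val : ZMod m) * q.2)
  | .inr i => (tdS m c).filter (fun p => p.1 = i)

lemma card_val_lt (t : ℕ) (ht : t ≤ m) :
    ((Finset.univ : Finset (ZMod m)).filter (fun z => z.val < t)).card = t := by
  have : (Finset.range t).card =
      ((Finset.univ : Finset (ZMod m)).filter (fun z => z.val < t)).card := by
    refine Finset.card_bij (fun a _ => (a : ZMod m)) ?_ ?_ ?_
    · intro a ha
      have h := Finset.mem_range.1 ha
      simp only [Finset.mem_filter, Finset.mem_univ, true_and]
      rwa [ZMod.val_cast_of_lt (by omega)]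
    · intro a ha b hb hab
      have h := Finset.mem_range.1 ha
      have h' := Finset.mem_range.1 hb
      have := congrArg ZMod.val hab
      rwa [ZMod.val_cast_of_lt (by omega), ZMod.val_cast_of_lt (by omega)] at this
    · intro z hz
      refine ⟨z.val, ?_, ?_⟩
      · simpa using hz
      · simp
  rw [← this, Finset.card_range]

lemma tdB_card_r (hc : ∀ i, c i ≤ m) (i : Fin 7) : (tdB m c (.inr i)).card = c i := by
  rw [← card_val_lt m (c i) (hc i)]
  refine Finset.card_bij (fun p _ => p.2) ?_ ?_ ?_
  · rintro ⟨j, z⟩ h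
    simp only [tdB, tdS, Finset.mem_filter, Finset.mem_univ, true_and] at h ⊢
    rw [← h.2]; exact h.1
  · rintro ⟨j, z⟩ h ⟨j', z'⟩ h' hz
    simp only [tdB, tdS, Finset.mem_filter, Finset.mem_univ, true_and] at h h' hz
    rw [h.2, h'.2, hz]
  · intro z hz
    refine ⟨(i, z), ?_, rfl⟩
    simp only [tdB, tdS, Finset.mem_filter, Finset.mem_univ, true_and] at hz ⊢
    exact ⟨hz, trivial⟩

lemma tdS_card (hc : ∀ i, c i ≤ m) : (tdS m c).card = ∑ i, c i := by
  have h : ∀ x ∈ tdS m c, x.1 ∈ (Finset.univ : Finset (Fin 7)) := fun _ _ => Finset.mem_univ _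
  rw [Finset.card_eq_sum_card_fiberwise (f := Prod.fst) (t := Finset.univ) h]
  refine Finset.sum_congr rfl (fun i _ => ?_)
  rw [← tdB_card_r m c hc i]; rfl

lemma tdB_card_l (hc : ∀ i, i.val < 5 → c i = m) (q : ZMod m × ZMod m) :
    (tdB m c (.inl q)).card = 5 ∨ (tdB m c (.inl q)).card = 6 ∨ (tdB m c (.inl q)).card = 7 := by
  have : (tdB m c (.inl q)).card = ((Finset.univ : Finset (Fin 7)).filter
      (fun i => (q.1 + (i.val : ZMod m) * q.2).val < c i)).card := by
    refine Finset.card_bij (fun p _ => p.1) ?_ ?_ ?_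
    · rintro ⟨j, z⟩ h
      simp only [tdB, tdS, Finset.mem_filter, Finset.mem_univ, true_and] at h ⊢
      rw [← h.2]; exact h.1
    · rintro ⟨j, z⟩ h ⟨j', z'⟩ h' hz
      simp only [tdB, tdS, Finset.mem_filter, Finset.mem_univ, true_and] at h h' hz
      rw [h.2, h'.2, hz]
    · intro i hi
      refine ⟨(i, q.1 + (i.val : ZMod m) * q.2), ?_, rfl⟩
      simp only [tdB, tdS, Finset.mem_filter, Finset.mem_univ, true_and] at hi ⊢
      exact ⟨hi, trivial⟩
  rw [this, Finset.card_filter, Fin.sum_univ_seven]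
  have h : ∀ i : Fin 7, i.val < 5 → (q.1 + (i.val : ZMod m) * q.2).val < c i := by
    intro i hi; rw [hc i hi]; exact ZMod.val_lt _
  rw [if_pos (h 0 (by decide)), if_pos (h 1 (by decide)), if_pos (h 2 (by decide)),
    if_pos (h 3 (by decide)), if_pos (h 4 (by decide))]
  split_ifs <;> simp

lemma td_glue (hc : ∀ i, c i ≤ m) (hc5 : ∀ i, i.val < 5 → c i = m)
    (hP : ∀ i, PrN (c i)) (h5 : FrN 5) (h6 : FrN 6) (h7 : FrN 7)
    (hm : Nat.Coprime m 30) : PrN (∑ i, c i) := by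
  have hu : ∀ i j : Fin 7, i ≠ j → IsUnit ((i.val : ZMod m) - (j.val : ZMod m)) := by
    have hd : ∀ d : ℕ, 0 < d → d < 7 → IsUnit ((d : ℕ) : ZMod m) := by
      intro d h0 h7
      have hdc : Nat.Coprime d m := by
        have h2 : Nat.Coprime 2 m := (Nat.Coprime.coprime_dvd_right (by norm_num) hm).symm
        have h3 : Nat.Coprime 3 m := (Nat.Coprime.coprime_dvd_right (by norm_num) hm).symm
        have h5 : Nat.Coprime 5 m := (Nat.Coprime.coprime_dvd_right (by norm_num) hm).symm
        interval_cases d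
        · exact Nat.coprime_one_left m
        · exact h2
        · exact h3
        · exact Nat.Coprime.mul_left h2 h2
        · exact h5
        · exact Nat.Coprime.mul_left h2 h3
      exact (ZMod.isUnit_iff_coprime d m).2 hdc
    intro i j hij
    have hij' : i.val ≠ j.val := fun h => hij (Fin.ext h)
    rcases Nat.lt_or_gt_of_ne hij' with h | h
    · have := (hd (j.val - i.val) (by omega) (by omega)).neg
      rwa [Nat.cast_sub h.le, neg_sub] at this
    · have := hd (i.val - j.val) (by omega) (by omega)
      rwa [Nat.cast_sub h.le] at this
  refine PrN_of (tdS m c) (tdS_card m c hc)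
    (glue (tdS m c) (tdB m c) (fun b => b.isRight = true) ?_ ?_ ?_ ?_ ?_)
  · rintro (q | i) <;> exact Finset.filter_subset _ _
  · rintro (q | i) h
    · refine FrOn_of_N _ ?_
      rcases tdB_card_l m c hc5 q with h | h | h <;> rw [h] <;> assumption
    · simp at h
  · rintro (q | i) h
    · simp at h
    · refine PrOn_of_N _ ?_
      rw [tdB_card_r m c hc]; exact hP i
  · rintro ⟨i, z⟩ hx
    refine ⟨.inr i, ⟨rfl, ?_⟩, ?_⟩
    · simp only [tdB, Finset.mem_filter]; exact ⟨hx, trivial⟩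
    · rintro (q | j) ⟨h, h'⟩
      · simp at h
      · simp only [tdB, Finset.mem_filter] at h'
        rw [h'.2]
  · rintro ⟨i, z⟩ hx ⟨j, w⟩ hy hxy
    by_cases hij : i = j
    · subst hij
      refine ⟨.inr i, ⟨?_, ?_⟩, ?_⟩
      · simp only [tdB, Finset.mem_filter]; exact ⟨hx, trivial⟩
      · simp only [tdB, Finset.mem_filter]; exact ⟨hy, trivial⟩
      · rintro (q | k) ⟨h, h'⟩
        · simp only [tdB, Finset.mem_filter] at h h'
          exact absurd (by rw [h.2, h'.2]) hxy
        · simp only [tdB, Finset.mem_filter] at h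
          rw [h.2]
    · obtain ⟨y, hy'⟩ := (hu i j hij).exists_right_inv
      refine ⟨.inl (z - i.val * (y * (z - w)), y * (z - w)), ⟨?_, ?_⟩, ?_⟩
      · simp only [tdB, Finset.mem_filter]; exact ⟨hx, by ring⟩
      · simp only [tdB, Finset.mem_filter]; exact ⟨hy, by linear_combination (z - w) * hy'⟩
      · rintro (⟨a, b⟩ | k) ⟨h, h'⟩
        · simp only [tdB, Finset.mem_filter] at h h'
          have hb : b = y * (z - w) := by
            linear_combination (-b) * hy' - y * h.2 + y * h'.2
          have ha : a = z - i.val * (y * (z - w)) := by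
            rw [← hb]; linear_combination -h.2
          rw [← hb] at ha ⊢
          rw [ha]
        · simp only [tdB, Finset.mem_filter] at h h'
          exact absurd (h.2.trans h'.2.symm) hij

end td

theorem PrN_td (m s t : ℕ) (hm0 : m ≠ 0) (hm : Nat.Coprime m 30) (hs : s ≤ m) (ht : t ≤ m)
    (Pm : PrN m) (Ps : PrN s) (Pt : PrN t) (h5 : FrN 5) (h6 : FrN 6) (h7 : FrN 7) :
    PrN (5 * m + s + t) := by
  haveI : NeZero m := ⟨hm0⟩
  have := td_glue m ![m, m, m, m, m, s, t]
    (by intro i; fin_cases i <;> simp [hs, ht])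
    (by intro i hi; fin_cases i <;> simp at hi ⊢)
    (by intro i; fin_cases i <;> simpa) h5 h6 h7 hm
  convert this using 1
  rw [Fin.sum_univ_seven]
  show _ = m + m + m + m + m + s + t
  ring

lemma FrN_5 : FrN 5 := FrN_cop 5 (by norm_num) (by norm_num) (by norm_num)
lemma FrN_7 : FrN 7 := FrN_cop 7 (by norm_num) (by norm_num) (by norm_num)
lemma PrN_zero : PrN 0 := PrOn_empty _ (by simp)

lemma PrN_cop (n : ℕ) (hn : n ≠ 0) (h : Nat.Coprime n 6) : PrN n :=
  PrN_of_FrN (FrN_cop n hn (Nat.Coprime.coprime_dvd_right (by norm_num) h).symm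
    (Nat.Coprime.coprime_dvd_right (by norm_num) h).symm)

lemma cop6 {m : ℕ} (h : Nat.Coprime m 30) : Nat.Coprime m 6 :=
  Nat.Coprime.coprime_dvd_right (by norm_num) h

lemma exists_m (n : ℕ) (hn : 60 ≤ n) :
    ∃ m, m ≠ 0 ∧ 11 ≤ m ∧ Nat.Coprime m 30 ∧ 5 * m + 5 ≤ n ∧ n ≤ 7 * m := by
  have hc : ∀ q r, Nat.Coprime r 30 → Nat.Coprime (30 * q + r) 30 := by
    intro q r h; simpa using h
  by_cases h1 : n < 5 * 41
  · rcases (by omega : (60 ≤ n ∧ n ≤ 77) ∨ (70 ≤ n ∧ n ≤ 91) ∨ (90 ≤ n ∧ n ≤ 119) ∨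
      (100 ≤ n ∧ n ≤ 133) ∨ (120 ≤ n ∧ n ≤ 161) ∨ (150 ≤ n ∧ n ≤ 203) ∨ n = 204) with
      h | h | h | h | h | h | h
    · exact ⟨11, by norm_num, by norm_num, by norm_num, by omega, by omega⟩
    · exact ⟨13, by norm_num, by norm_num, by norm_num, by omega, by omega⟩
    · exact ⟨17, by norm_num, by norm_num, by norm_num, by omega, by omega⟩
    · exact ⟨19, by norm_num, by norm_num, by norm_num, by omega, by omega⟩
    · exact ⟨23, by norm_num, by norm_num, by norm_num, by omega, by omega⟩
    · exact ⟨29, by norm_num, by norm_num, by norm_num, by omega, by omega⟩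
    · exact ⟨31, by norm_num, by norm_num, by norm_num, by omega, by omega⟩
  · -- the interval `[n/7, (n-5)/5]` contains a number that is `±1` or `±7` mod 30
    have key : ∀ q r, r ∈ ({1, 7, 11, 13, 17, 19, 23, 29} : Finset ℕ) → 11 ≤ 30 * q + r →
        5 * (30 * q + r) + 5 ≤ n → n ≤ 7 * (30 * q + r) →
        ∃ m, m ≠ 0 ∧ 11 ≤ m ∧ Nat.Coprime m 30 ∧ 5 * m + 5 ≤ n ∧ n ≤ 7 * m := by
      intro q r hr h1 h2 h3
      refine ⟨30 * q + r, by omega, h1, hc q r ?_, h2, h3⟩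
      clear h1 h2 h3
      revert r; decide
    obtain ⟨q, e, he, hq⟩ : ∃ q e, e < 30 ∧ (n - 5) / 5 = 30 * q + e :=
      ⟨(n - 5) / 5 / 30, (n - 5) / 5 % 30, Nat.mod_lt _ (by norm_num), by omega⟩
    rcases (by omega : e < 1 ∨ (1 ≤ e ∧ e < 7) ∨ (7 ≤ e ∧ e < 11) ∨ (11 ≤ e ∧ e < 13) ∨
      (13 ≤ e ∧ e < 17) ∨ (17 ≤ e ∧ e < 19) ∨ (19 ≤ e ∧ e < 23) ∨ (23 ≤ e ∧ e < 29) ∨ e = 29)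
      with h | h | h | h | h | h | h | h | h
    · exact key (q - 1) 29 (by simp) (by omega) (by omega) (by omega)
    · exact key q 1 (by simp) (by omega) (by omega) (by omega)
    · exact key q 7 (by simp) (by omega) (by omega) (by omega)
    · exact key q 11 (by simp) (by omega) (by omega) (by omega)
    · exact key q 13 (by simp) (by omega) (by omega) (by omega)
    · exact key q 17 (by simp) (by omega) (by omega) (by omega)
    · exact key q 19 (by simp) (by omega) (by omega) (by omega)
    · exact key q 23 (by simp) (by omega) (by omega) (by omega)
    · exact key q 29 (by simp) (by omega) (by omega) (by omega)

lemma split_t (m r : ℕ) (hm : 11 ≤ m) (h5 : 5 ≤ r) (hr : r ≤ 2 * m) :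
    ∃ s t, s + t = r ∧ s ≤ m ∧ t ≤ m ∧ 5 ≤ s ∧ (t = 0 ∨ 5 ≤ t) := by
  by_cases h : r ≤ m
  · exact ⟨r, 0, by omega, by omega, by omega, by omega, by omega⟩
  · exact ⟨r - r / 2, r / 2, by omega, by omega, by omega, by omega, by omega⟩

theorem PrN_small (n : ℕ) (hn : 5 ≤ n) (h : n < 60) : PrN n := by
  have p5 := PrN_of_FrN FrN_5
  have p6 := PrN_of_FrN FrN_6
  have p7 := PrN_of_FrN FrN_7
  have td : ∀ s t, s ≤ 7 → t ≤ 7 → PrN s → PrN t → PrN (35 + s + t) := fun s t hs ht Ps Pt =>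
    PrN_td 7 s t (by norm_num) (by norm_num) hs ht p7 Ps Pt FrN_5 FrN_6 FrN_7
  by_cases hc : Nat.Coprime n 6
  · exact PrN_cop n (by omega) hc
  interval_cases n <;> first
    | (exfalso; apply hc; norm_num; done)
    | skip
  · exact p6
  · exact PrN_of_FrN FrN_8
  · exact PrN_of_FrN FrN_9
  · exact PrN_10
  · exact PrN_12
  · exact PrN_14
  · exact PrN_15
  · exact PrN_16
  · exact PrN_18
  · exact PrN_20
  · exact PrN_21
  · exact PrN_22
  · exact PrN_24
  · exact PrN_26
  · exact PrN_27
  · exact PrN_28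
  · exact PrN_30 p5
  · exact PrN_32 p5
  · exact PrN_33
  · exact PrN_34 p5
  · exact td 1 0 (by norm_num) (by norm_num) PrN_one PrN_zero
  · exact PrN_38 p5
  · exact PrN_39
  · exact td 5 0 (by norm_num) (by norm_num) p5 PrN_zero
  · exact td 7 0 (by norm_num) (by norm_num) p7 PrN_zero
  · exact PrN_44 p5
  · exact td 5 5 (by norm_num) (by norm_num) p5 p5
  · exact td 6 5 (by norm_num) (by norm_num) p6 p5
  · exact td 7 6 (by norm_num) (by norm_num) p7 p6
  · exact PrN_50 p7
  · exact PrN_51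
  · exact PrN_52 p7
  · exact PrN_54 p7
  · exact PrN_56 p7
  · exact PrN_57
  · exact PrN_58 p7

theorem PrN_all (n : ℕ) (hn : 5 ≤ n) : PrN n := by
  induction n using Nat.strong_induction_on with
  | _ n ih =>
    by_cases h : n < 60
    · exact PrN_small n hn h
    · obtain ⟨m, hm0, hm11, hm, h1, h2⟩ := exists_m n (by omega)
      obtain ⟨s, t, hst, hs, ht, hs5, ht5⟩ := split_t m (n - 5 * m) hm11 (by omega) (by omega)
      have e : n = 5 * m + s + t := by omega
      have Pt : PrN t := by
        rcases ht5 with rfl | h5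
        · exact PrN_zero
        · exact ih t (by omega) h5
      rw [e]
      exact PrN_td m s t hm0 hm hs ht (PrN_cop m hm0 (cop6 hm)) (ih s (by omega) hs5) Pt
        FrN_5 FrN_6 FrN_7

end MD

namespace MD

lemma countP_ind {α : Type} (P : α → Prop) [DecidablePred P] (M : Multiset α) :
    M.countP P = (M.map (fun t => ind (P t))).sum := by
  induction M using Multiset.induction_on with
  | empty => simp
  | cons a M ih =>
    rw [Multiset.countP_cons, ih, Multiset.map_cons, Multiset.sum_cons, add_comm]
    congr 1
    by_cases h : P a <;> simp [ind, h]

lemma ex_sym {α : Type} (A B : α) (Q : α → α → Prop) :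
    (∃ a b, s(A, B) = s(a, b) ∧ Q a b) ↔ Q A B ∨ Q B A := by
  constructor
  · rintro ⟨a, b, h, hQ⟩
    rw [Sym2.eq_iff] at h
    rcases h with ⟨rfl, rfl⟩ | ⟨rfl, rfl⟩
    · exact Or.inl hQ
    · exact Or.inr hQ
  · rintro (h | h)
    · exact ⟨A, B, rfl, h⟩
    · exact ⟨B, A, Sym2.eq_swap, h⟩

lemma ind_or {P Q : Prop} (h : ¬ (P ∧ Q)) : ind (P ∨ Q) = ind P + ind Q := by
  by_cases hP : P <;> by_cases hQ : Q <;> simp_all [ind]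

lemma ind_and {P Q : Prop} : ind (P ∧ Q) = ind P * ind Q := by
  by_cases hP : P <;> by_cases hQ : Q <;> simp_all [ind]

lemma sum_filter {α β : Type} [Fintype β] [DecidableEq β] (M : Multiset α) (f : α → β) :
    ∑ r : β, M.filter (fun t => f t = r) = M := by
  induction M using Multiset.induction_on with
  | empty => simp
  | cons a M ih =>
    have : ∀ r, (a ::ₘ M).filter (fun t => f t = r) =
        (if r = f a then {a} else 0) + M.filter (fun t => f t = r) := by
      intro r
      by_cases h : f a = r
      · rw [Multiset.filter_cons_of_pos (p := fun t => f t = r) _ h, if_pos h.symm]; rfl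
      · rw [Multiset.filter_cons_of_neg (p := fun t => f t = r) _ h, if_neg (fun h' => h h'.symm), zero_add]
    simp only [this, Finset.sum_add_distrib, ih]
    simp

lemma sum_map_filter {α : Type} (M : Multiset α) (P : α → Prop) [DecidablePred P] (f : α → ℕ) :
    ((M.filter P).map f).sum = (M.map (fun t => ind (P t) * f t)).sum := by
  induction M using Multiset.induction_on with
  | empty => simp
  | cons a M ih =>
    by_cases h : P a
    · rw [Multiset.filter_cons_of_pos _ h]; simp [ih, ind, h]
    · rw [Multiset.filter_cons_of_neg _ h]; simp [ih, ind, h]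

theorem final_of_PrN (n : ℕ) (h : PrN n) :
    ∃ T : CMDRR (2 * n) 0, ∃ rounds : Multiset (Multiset (Game (2 * n))),
      rounds.sum = T.games ∧ Multiset.card rounds = 2 * n ∧
      ∀ r ∈ rounds, FullRound r := by
  obtain ⟨M, hM0⟩ := h
  have hM : ∀ (k : Fin 6) (a b : Fin n × Bool), cnt k M a b =
      if a.1 = b.1 then hole k a.2 b.2 else 1 := by
    intro k a b
    rw [hM0]
    by_cases h : a.1 = b.1 <;> simp [h]
  have hcard : Fintype.card (Fin n × Bool) = Fintype.card (Fin (2 * n)) := by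
    simp [mul_comm]
  let e : Fin n × Bool ≃ Fin (2 * n) := Fintype.equivOfCardEq hcard
  have he : ∀ x m, (e x = m ↔ x = e.symm m) := fun x m => e.eq_symm_apply.symm
  let gm : Tup (Fin n × Bool) → Game (2 * n) := fun t => s((e (t 1), e (t 2)), (e (t 3), e (t 4)))
  have ne13 : ∀ t ∈ M, t 1 ≠ t 3 := by
    intro t ht h13
    have := hM 4 (t 1) (t 1)
    rw [if_pos rfl] at this
    simp only [hole, cnt, cols] at this
    simp [pc_eq_zero] at this
    exact this.1 t ht rfl h13.symm
  have ne24 : ∀ t ∈ M, t 2 ≠ t 4 := by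
    intro t ht h13
    have := hM 5 (t 2) (t 2)
    rw [if_pos rfl] at this
    simp only [hole, cnt, cols] at this
    simp [pc_eq_zero] at this
    exact this.1 t ht rfl h13.symm
  have red : ∀ (P : Game (2 * n) → Prop) [DecidablePred P] (k : Fin 6) (a b : Fin n × Bool),
      (∀ t ∈ M, ind (P (gm t)) = ind (t (cols k).1 = a ∧ t (cols k).2.1 = b) +
        ind (t (cols k).2.2.1 = a ∧ t (cols k).2.2.2 = b)) →
      (M.map gm).countP P = if a.1 = b.1 then hole k a.2 b.2 else 1 := by
    intro P _ k a b hP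
    rw [← hM, countP_ind, Multiset.map_map, cnt, pc, pc, ← Multiset.sum_map_add]
    congr 1
    exact Multiset.map_congr rfl hP
  have hMM : ∀ m m', (M.map gm).countP (Game.opposesMM m m') =
      if (e.symm m).1 = (e.symm m').1 then hole 4 (e.symm m).2 (e.symm m').2 else 1 := by
    intro m m'
    apply red
    intro t ht
    have h1 := ne13 t ht
    simp only [Game.opposesMM, gm, ex_sym, he, cols]
    rw [ind_or]
    · simp
    · rintro ⟨⟨h2, h3⟩, h4, h5⟩
      exact h1 (h2.trans h4.symm)
  have hWW : ∀ m m', (M.map gm).countP (Game.opposesWW m m') =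
      if (e.symm m).1 = (e.symm m').1 then hole 5 (e.symm m).2 (e.symm m').2 else 1 := by
    intro m m'
    apply red
    intro t ht
    have h1 := ne24 t ht
    simp only [Game.opposesWW, gm, ex_sym, he, cols]
    rw [ind_or]
    · simp
    · rintro ⟨⟨h2, h3⟩, h4, h5⟩
      exact h1 (h2.trans h4.symm)
  have hPa : ∀ m w, (M.map gm).countP (Game.partners m w) = 1 := by
    intro m w
    rw [red (Game.partners m w) 0 (e.symm m) (e.symm w)]
    · simp [hole]
    intro t ht
    have h1 := ne13 t ht
    simp only [Game.partners, gm, Sym2.mem_iff, Prod.mk.injEq, eq_comm (a := m), eq_comm (a := w), he, cols]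
    rw [ind_or]
    · simp
    · rintro ⟨⟨h2, h3⟩, h4, h5⟩
      exact h1 (h2.trans h4.symm)
  have hOp : ∀ m w, (M.map gm).countP (Game.opposesMW m w) = 1 := by
    intro m w
    rw [red (Game.opposesMW m w) 1 (e.symm m) (e.symm w)]
    · simp [hole]
    intro t ht
    have h1 := ne13 t ht
    simp only [Game.opposesMW, gm, ex_sym, he, cols]
    rw [ind_or]
    · simp
    · rintro ⟨⟨h2, h3⟩, h4, h5⟩
      exact h1 (h2.trans h4.symm)
  have two : ∀ (c : Fin (2 * n) → Fin (2 * n) → ℕ) (k : Fin 6), 4 ≤ k.val →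
      (∀ m m', c m m' =
      if (e.symm m).1 = (e.symm m').1 then hole k (e.symm m).2 (e.symm m').2 else 1) →
      ∀ m, ∃ m', m' ≠ m ∧ c m m' = 2 ∧ ∀ m'', m'' ≠ m → m'' ≠ m' → c m m'' = 1 := by
    intro c k hk hc m
    have hk' : ¬ k.val < 4 := by omega
    refine ⟨e ((e.symm m).1, !(e.symm m).2), ?_, ?_, ?_⟩
    · intro h
      rw [he] at h
      have := congrArg Prod.snd h
      simp at this
    · rw [hc]; simp [hole, hk']
    · intro m'' h1 h2
      rw [hc, if_neg]
      intro h3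
      have h4 : (e.symm m'').2 ≠ (e.symm m).2 := by
        intro h4
        exact h1 (e.symm.injective (Prod.ext h3.symm h4))
      apply h2
      rw [← e.symm_apply_eq]
      refine Prod.ext h3.symm ?_
      revert h4
      cases (e.symm m'').2 <;> cases (e.symm m).2 <;> simp
  have rm : ∀ r m, (((M.filter (fun t => t 0 = r)).map gm).countP (Game.manIn m)) = 1 := by
    intro r m
    have e1 := hM 2 r (e.symm m)
    have e2 : (if r.1 = (e.symm m).1 then hole 2 r.2 (e.symm m).2 else 1) = 1 := by simp [hole]
    rw [e2] at e1
    rw [← e1, countP_ind, Multiset.map_map, sum_map_filter, cnt, pc, pc, ← Multiset.sum_map_add]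
    congr 1
    apply Multiset.map_congr rfl
    intro t ht
    have h1 := ne13 t ht
    simp only [Function.comp, Game.manIn, gm, ex_sym, he, cols]
    rw [ind_or]
    · simp [ind_and, mul_add]
    · rintro ⟨h2, h4⟩
      exact h1 (h2.trans h4.symm)
  have rw' : ∀ r m, (((M.filter (fun t => t 0 = r)).map gm).countP (Game.womanIn m)) = 1 := by
    intro r m
    have e1 := hM 3 r (e.symm m)
    have e2 : (if r.1 = (e.symm m).1 then hole 3 r.2 (e.symm m).2 else 1) = 1 := by simp [hole]
    rw [e2] at e1
    rw [← e1, countP_ind, Multiset.map_map, sum_map_filter, cnt, pc, pc, ← Multiset.sum_map_add]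
    congr 1
    apply Multiset.map_congr rfl
    intro t ht
    have h1 := ne24 t ht
    simp only [Function.comp, Game.womanIn, gm, ex_sym, he, cols]
    rw [ind_or]
    · simp [ind_and, mul_add]
    · rintro ⟨h2, h4⟩
      exact h1 (h2.trans h4.symm)
  refine ⟨{ spouses := ∅, spouses_card := rfl, spouses_inj1 := by simp, spouses_inj2 := by simp,
            games := M.map gm, valid := ?_, no_spouse_game := by simp,
            partners_once := fun m w _ => hPa m w, opposesMW_once := fun m w _ => hOp m w,
            spousedM_opposes := by simp, spousedW_opposes := by simp,
            unspousedM_opposes := ?_, unspousedW_opposes := ?_ },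
    (Finset.univ : Finset (Fin n × Bool)).val.map
      (fun r => (M.filter (fun t => t 0 = r)).map gm), ?_, ?_, ?_⟩
  · intro g hg
    obtain ⟨t, ht, rfl⟩ := Multiset.mem_map.1 hg
    exact ⟨_, _, rfl, fun h => ne13 t ht (e.injective h), fun h => ne24 t ht (e.injective h)⟩
  · intro m _
    obtain ⟨m', h1, h2, h3⟩ := two _ 4 (by decide) hMM m
    exact ⟨m', h1, by simp, h2, h3⟩
  · intro m _
    obtain ⟨m', h1, h2, h3⟩ := two _ 5 (by decide) hWW m
    exact ⟨m', h1, by simp, h2, h3⟩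
  · change ∑ r : Fin n × Bool, (M.filter (fun t => t 0 = r)).map gm = M.map gm
    conv_rhs => rw [← sum_filter M (fun t => t 0)]
    exact (map_sum (Multiset.mapAddMonoidHom gm) (fun r => M.filter (fun t => t 0 = r)) _).symm
  · rw [Multiset.card_map]
    change Fintype.card (Fin n × Bool) = _
    simp [mul_comm]
  · intro r hr
    obtain ⟨r, _, rfl⟩ := Multiset.mem_map.1 hr
    exact ⟨⟨fun m => (rm r m).le, fun m => (rw' r m).le⟩, Or.inl ⟨even_two_mul n, rm r, rw' r⟩⟩

end MD

theorem strict_mmdrr_fully_resolvable (n : ℕ) (hn : 5 ≤ n) :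
    ∃ T : CMDRR (2 * n) 0, ∃ rounds : Multiset (Multiset (Game (2 * n))),
      rounds.sum = T.games ∧ Multiset.card rounds = 2 * n ∧
      ∀ r ∈ rounds, FullRound r :=
  MD.final_of_PrN n (MD.PrN_all n hn)
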